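/- arXiv:2105.08608 — 2 statements merged into one kernel-verified Lean document; each statement's English description precedes it below -/
import Mathlib

section
/- Let 0 < ρ ≪ ε ≪ 1 be real constants and let n ≡ 0 (mod 4) be sufficiently large. Let H be a balanced (1,4)-partite 5-graph with partition classes X, [n], |X| = n/4, such that d_H({x,v}) > binom(n-1,3) - binom(3n/4,3) - ρn^3 for every x ∈ X and v ∈ [n]. If H is not ε-close to 𝓗_4(n,n/4), then there exists a spanning subgraph H' of H such that: (1) for all vertices x of H' with at most n^{0.99} exceptions, d_{H'}(x) = (1 ± n^{-0.01})·n^{0.2}; (2) d_{H'}(x) < 2n^{0.2} for every vertex x; and (3) d_{H'}({x,y}) < n^{0.19} for every pair of distinct vertices x, y. -/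
/-- The balanced `(1,k)`-partite `(k+1)`-graph `𝓗_k(n, n/k)` on `X ⊕ [n]`
(`X = Fin (n/k)`): edges are `{x} ∪ e` where `x ∈ X` and `e` is a `k`-subset of
`[n]` meeting both `[n/k]` (the first `n/k` elements) and its complement. -/
def calHk (n k : ℕ) : Finset (Finset (Fin (n / k) ⊕ Fin n)) :=
  Finset.univ.biUnion (fun x : Fin (n / k) =>
    ((Finset.powersetCard k (Finset.univ : Finset (Fin n))).filter
      (fun s => (∃ v : Fin n, v ∈ s ∧ (v : ℕ) < n / k) ∧
        (∃ v : Fin n, v ∈ s ∧ n / k ≤ (v : ℕ)))).image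
      (fun s => insert (Sum.inl x) (s.image Sum.inr)))

/-- The degree of a vertex in a hypergraph. -/
def vdeg {V : Type*} [DecidableEq V] (H : Finset (Finset V)) (x : V) : ℕ :=
  (H.filter (fun e => x ∈ e)).card

/-- The degree of a pair of vertices in a hypergraph. -/
def pdeg {V : Type*} [DecidableEq V] (H : Finset (Finset V)) (x y : V) : ℕ :=
  (H.filter (fun e => x ∈ e ∧ y ∈ e)).card

lemma bound_low {q ζ η ξ T : ℝ} (hq1 : q ≤ 11 / 20) (hζq : ζ ≤ q) (hη : 0 ≤ η)
    (hξ : 0 ≤ ξ) (hmean : 1 / 4 + η + ξ ≤ ζ)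
    (h1 : q ^ 3 + 3 * (q ^ 2 * (1 - q) - (q - ζ) ^ 2 * (1 - q - η) - 2 * (q - ζ) * q * η
      - q ^ 2 * ξ) + 3 * ((1 - q) ^ 2 * ζ - 2 * (1 - q) * q * η) ≤ T) : 43 / 100 ≤ T := by
  have hq : 1/4 ≤ q := by linarith
  have e1 : q^2 * ξ ≤ q^2 * (ζ - 1/4 - η) := by gcongr; linarith
  have hco : 0 ≤ 2 * (1-q) * q - ζ^2 := by nlinarith
  have e2 : (2 * (1-q) * q - ζ^2) * η ≤ (2 * (1-q) * q - ζ^2) * (ζ - 1/4) := by gcongr; linarith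
  have key : q^3+3*q^2*(1-q)-3*(q-ζ)^2*(1-q)-3*q^2*(ζ-1/4)+3*(1-q)^2*ζ+(3*ζ^2-6*(1-q)*q)*(ζ-1/4) ≤ T := by
    nlinarith
  refine le_trans ?_ key
  have hz : 1/4 ≤ ζ := by linarith
  clear e1 e2 key hco h1 hmean
  nlinarith [mul_nonneg (sub_nonneg.2 hz) (sub_nonneg.2 hζq), mul_nonneg (mul_nonneg (sub_nonneg.2 hz) (sub_nonneg.2 hζq)) (sub_nonneg.2 hq1), mul_nonneg (mul_nonneg (sub_nonneg.2 hz) (sub_nonneg.2 hζq)) (sub_nonneg.2 hz), sq_nonneg (q-1/2), sq_nonneg (ζ-1/2), sq_nonneg (q-ζ)]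

lemma bound_mid {q ζ η ξ T : ℝ} (hq0 : 11 / 20 ≤ q) (hq1 : q ≤ 16 / 25) (hζq : ζ ≤ q) (hη : 0 ≤ η)
    (hξ : 0 ≤ ξ) (hmean : 1 / 4 + η + ξ ≤ ζ)
    (h0 : q ^ 3 + 3 * (q ^ 2 * (1 - q) - (q - ζ) ^ 2 * (1 - q - η) - 2 * (q - ζ) * q * η
      - q ^ 2 * ξ) ≤ T)
    (h1 : q ^ 3 + 3 * (q ^ 2 * (1 - q) - (q - ζ) ^ 2 * (1 - q - η) - 2 * (q - ζ) * q * η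
      - q ^ 2 * ξ) + 3 * ((1 - q) ^ 2 * ζ - 2 * (1 - q) * q * η) ≤ T) : 43 / 100 ≤ T := by
  have e1 : q^2 * ξ ≤ q^2 * (ζ - 1/4 - η) := by gcongr; linarith
  have hz : 1/4 ≤ ζ := by linarith
  have h0' : q^3+3*q^2*(1-q)-3*(q-ζ)^2*(1-q)-3*q^2*(ζ-1/4) + 3 * ζ^2*η ≤ T := by nlinarith
  have h1' : q^3+3*q^2*(1-q)-3*(q-ζ)^2*(1-q)-3*q^2*(ζ-1/4) + 3 * ζ^2*η+ 3 * ((1 - q) ^ 2 * ζ - 2 * (1 - q) * q * η) ≤ T := by nlinarith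
  have hd : 0 < 2 * (1-q) * q := by nlinarith
  have hco : 0 ≤ 2 * (1-q) * q - ζ^2 := by nlinarith
  have c := add_le_add (mul_le_mul_of_nonneg_left h0' hco) (mul_le_mul_of_nonneg_left h1' (sq_nonneg ζ))
  have c2 : (2*q*(q^3+3*q^2*(1-q)-3*(q-ζ)^2*(1-q)-3*q^2*(ζ-1/4)) + 3*(1-q)*ζ^3)*(1-q) ≤ (2*q*T)*(1-q) := by
    nlinarith
  have c3 := le_of_mul_le_mul_right c2 (by linarith)
  have : 2*q*(43/100) ≤ 2*q*T := by
    refine le_trans ?_ c3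
    clear c c2 c3 hco hd h0' h1' e1 h0 h1 hmean
    nlinarith [mul_nonneg (sub_nonneg.2 hz) (sub_nonneg.2 hζq), mul_nonneg (mul_nonneg (sub_nonneg.2 hz) (sub_nonneg.2 hζq)) (sub_nonneg.2 hq1), mul_nonneg (mul_nonneg (sub_nonneg.2 hz) (sub_nonneg.2 hζq)) (sub_nonneg.2 hz), mul_nonneg (sub_nonneg.2 hq0) (sub_nonneg.2 hq1),mul_nonneg (sub_nonneg.2 hz) (sub_nonneg.2 hq1)]
  exact le_of_mul_le_mul_left this (by linarith)

lemma bound_high {q ζ η ξ T : ℝ} (hq0 : 16 / 25 ≤ q) (hq1 : q ≤ 69 / 100) (hζq : ζ ≤ q) (hη : 0 ≤ η)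
    (hξ : 0 ≤ ξ) (hmean : 1 / 4 + η + ξ ≤ ζ)
    (h : q ^ 3 + 3 * ζ * q * (1 - q) - 3 / 2 * q ^ 2 * (η + ξ) ≤ T) : 43 / 100 ≤ T := by
  have h' : q^3 + 3/8*q^2 + 3*q*ζ*(1-3/2*q) ≤ T := by nlinarith
  rcases le_total q (2/3) with h2 | h2
  · have : 3*q*(1/4)*(1-3/2*q) ≤ 3*q*ζ*(1-3/2*q) := by gcongr <;> linarith
    nlinarith [mul_nonneg (sub_nonneg.2 hq0) (sub_nonneg.2 hq0)]
  · have : q*(3/2*q-1)*ζ ≤ q*(3/2*q-1)*q := by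
      gcongr; exact mul_nonneg (by linarith) (by linarith)
    nlinarith [mul_nonneg (sub_nonneg.2 h2) (sub_nonneg.2 hq1)]

lemma near_extremal {q ζ η ξ T τ : ℝ} (hζq : ζ ≤ q) (hη : 0 ≤ η)
    (hξ : 0 ≤ ξ) (hmean : 1 / 4 + η + ξ ≤ ζ) (hcube : q ^ 3 ≤ T)
    (h : q ^ 3 + 3 * ζ * q * (1 - q) - 3 / 2 * q ^ 2 * (η + ξ) ≤ T)
    (h0 : q ^ 3 + 3 * (q ^ 2 * (1 - q) - (q - ζ) ^ 2 * (1 - q - η) - 2 * (q - ζ) * q * η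
      - q ^ 2 * ξ) ≤ T)
    (h1 : q ^ 3 + 3 * (q ^ 2 * (1 - q) - (q - ζ) ^ 2 * (1 - q - η) - 2 * (q - ζ) * q * η
      - q ^ 2 * ξ) + 3 * ((1 - q) ^ 2 * ζ - 2 * (1 - q) * q * η) ≤ T)
    (hT : T ≤ 27 / 64 + τ) (hτ : τ ≤ 1 / 200) :
    3 / 4 - 2 * τ ≤ q ∧ q - ζ ≤ 15 * τ := by
  have hq69 : 69 / 100 ≤ q := by
    by_contra! hq
    have : 43 / 100 ≤ T := by
      rcases le_total q (11/20) with h2 | h2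
      · exact bound_low h2 hζq hη hξ hmean h1
      rcases le_total q (16/25) with h3 | h3
      · exact bound_mid h2 h3 hζq hη hξ hmean h0 h1
      · exact bound_high h3 hq.le hζq hη hξ hmean h
    linarith
  have h' : 27/64 + (3/4 - q) * (7/2*q^2 - 3/4*q - 9/16) + 3*q*(3/2*q-1)*(q - ζ) ≤ T := by nlinarith
  have hα : 0 ≤ q - ζ := by linarith
  have hc : 7/100 * (q-ζ) ≤ 3*q*(3/2*q-1)*(q - ζ) := by gcongr; nlinarith
  rcases le_total q (3/4) with h2 | h2
  · have : (3/4 - q) * (1/2) ≤ (3/4 - q) * (7/2*q^2 - 3/4*q - 9/16) := by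
      gcongr; nlinarith
    constructor <;> linarith
  · have hcc : 27/100 * (q-ζ) ≤ 3*q*(3/2*q-1)*(q - ζ) := by gcongr; nlinarith
    have : (q - 3/4) * (7/2*q^2 - 3/4*q - 9/16) ≤ (q - 3/4) * (11/5) := by
      gcongr; nlinarith
    have hτq : q - 3/4 ≤ τ := by
      have : (q - 3/4) * 1 ≤ (q - 3/4) * (q^2 + 3/4*q + 9/16) := by gcongr; nlinarith
      nlinarith only [this, hcube, hT]
    constructor <;> linarith

/-- Indicator of `x < 1/3`. -/
noncomputable def smallInd (x : ℝ) : ℝ := if x < 1 / 3 then 1 else 0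
/-- Indicator of `1/3 ≤ x`. -/
noncomputable def bigInd (x : ℝ) : ℝ := if x < 1 / 3 then 0 else 1
/-- Scaled distance of a small `x` to `1/3`. -/
noncomputable def smallGap (x : ℝ) : ℝ := if x < 1 / 3 then 1 - 3 * x else 0
/-- Scaled excess of a big `x` over `1/3`, truncated at `2/3`. -/
noncomputable def midExcess (x : ℝ) : ℝ := if x < 1 / 3 then 0 else min (3 * x - 1) 1
/-- Scaled excess of a big `x` over `2/3`, truncated at `1`. -/
noncomputable def topExcess (x : ℝ) : ℝ :=
  if x < 1 / 3 then 0 else min (max (3 * x - 2) 0) 1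

lemma excess_cases {x : ℝ} (h : 1 / 3 ≤ x) :
    (3 * x ≤ 2 ∧ midExcess x = 3 * x - 1 ∧ topExcess x = 0) ∨
    (2 ≤ 3 * x ∧ x ≤ 1 ∧ midExcess x = 1 ∧ topExcess x = 3 * x - 2) ∨
    (1 ≤ x ∧ midExcess x = 1 ∧ topExcess x = 1) := by
  unfold midExcess topExcess
  rw [if_neg h.not_gt, if_neg h.not_gt]
  rcases le_total (3 * x) 2 with h2 | h2
  · left
    refine ⟨h2, min_eq_left (by linarith), ?_⟩
    rw [max_eq_right (by linarith), min_eq_left (by linarith)]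
  rcases le_total x 1 with h3 | h3
  · right; left
    refine ⟨h2, h3, min_eq_right (by linarith), ?_⟩
    rw [max_eq_left (by linarith), min_eq_left (by linarith)]
  · right; right
    refine ⟨h3, min_eq_right (by linarith), ?_⟩
    rw [max_eq_left (by linarith), min_eq_right (by linarith)]

lemma two_small_linear {x y z : ℝ} (hx : 0 ≤ x) (hy : 0 ≤ y) (hz : 1 / 3 ≤ z) :
    (1 - 3 * x + (1 - 3 * y) - (midExcess z + topExcess z)) / 2 ≤
      if x + y + z < 1 then (1 : ℝ) else 0 := by
  rcases excess_cases hz with ⟨h, h1, h2⟩ | ⟨h, h', h1, h2⟩ | ⟨h, h1, h2⟩ <;>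
    rw [h1, h2] <;> split_ifs <;> linarith

lemma two_small_multilinear {x y z : ℝ} (hx : 0 ≤ x) (hy : 0 ≤ y) (hx3 : x < 1 / 3)
    (hy3 : y < 1 / 3) (hz : 1 / 3 ≤ z) :
    1 - (3 * x * (3 * y) * (1 - midExcess z) + (3 * x + 3 * y) * midExcess z + topExcess z) ≤
      if x + y + z < 1 then (1 : ℝ) else 0 := by
  rcases excess_cases hz with ⟨h, h1, h2⟩ | ⟨h, h', h1, h2⟩ | ⟨h, h1, h2⟩ <;>
    rw [h1, h2] <;> split_ifs with hs
  · nlinarith [mul_nonneg hx hy, mul_nonneg (mul_nonneg hx hy) (by linarith : 0 ≤ 2 - 3 * z),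
      mul_nonneg (add_nonneg hx hy) (by linarith : 0 ≤ 3 * z - 1)]
  · have h3 : 0 ≤ (1 - 3 * x) * (1 - 3 * y) := mul_nonneg (by linarith) (by linarith)
    nlinarith [mul_nonneg h3 (by linarith : 0 ≤ 2 - 3 * z),
      mul_nonneg (by linarith : 0 ≤ x + y + z - 1) (by linarith : 0 ≤ 2 - 3 * z),
      mul_nonneg (by linarith : 0 ≤ x + y + z - 1) (by linarith : 0 ≤ 3 * z - 1)]
  all_goals linarith

lemma one_small {x y z : ℝ} (hx : 0 ≤ x) (hy : 1 / 3 ≤ y) (hz : 1 / 3 ≤ z) :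
    1 - 3 * x - midExcess y - midExcess z ≤ if x + y + z < 1 then (1 : ℝ) else 0 := by
  rcases excess_cases hy with ⟨h, h1, h2⟩ | ⟨h, h', h1, h2⟩ | ⟨h, h1, h2⟩ <;>
  rcases excess_cases hz with ⟨k, k1, k2⟩ | ⟨k, k', k1, k2⟩ | ⟨k, k1, k2⟩ <;>
    rw [h1, k1] <;> split_ifs <;> linarith

lemma small_vals {x : ℝ} (h : x < 1 / 3) : smallInd x = 1 ∧ bigInd x = 0 ∧
    smallGap x = 1 - 3 * x ∧ midExcess x = 0 ∧ topExcess x = 0 :=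
  ⟨if_pos h, if_pos h, if_pos h, if_pos h, if_pos h⟩

lemma big_vals {x : ℝ} (h : 1 / 3 ≤ x) : smallInd x = 0 ∧ bigInd x = 1 ∧ smallGap x = 0 :=
  ⟨if_neg h.not_gt, if_neg h.not_gt, if_neg h.not_gt⟩

lemma indicator_ge_linear {x y z : ℝ} (hx : 0 ≤ x) (hy : 0 ≤ y) (hz : 0 ≤ z) :
    smallInd x * smallInd y * smallInd z
      + 1 / 2 * (smallGap x * smallInd y * bigInd z + smallInd x * smallGap y * bigInd z
          - smallInd x * smallInd y * (midExcess z + topExcess z))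
      + 1 / 2 * (smallGap x * bigInd y * smallInd z + smallInd x * bigInd y * smallGap z
          - smallInd x * (midExcess y + topExcess y) * smallInd z)
      + 1 / 2 * (bigInd x * smallGap y * smallInd z + bigInd x * smallInd y * smallGap z
          - (midExcess x + topExcess x) * smallInd y * smallInd z)
      ≤ if x + y + z < 1 then (1 : ℝ) else 0 := by
  have hI : (0 : ℝ) ≤ if x + y + z < 1 then (1 : ℝ) else 0 := by split_ifs <;> norm_num
  rcases lt_or_ge x (1 / 3) with h1 | h1 <;> rcases lt_or_ge y (1 / 3) with h2 | h2 <;>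
    rcases lt_or_ge z (1 / 3) with h3 | h3
  · obtain ⟨a1, b1, c1, d1, e1⟩ := small_vals h1
    obtain ⟨a2, b2, c2, d2, e2⟩ := small_vals h2
    obtain ⟨a3, b3, c3, d3, e3⟩ := small_vals h3
    rw [if_pos (by linarith)]
    simp only [a1, b1, c1, d1, e1, a2, b2, c2, d2, e2, a3, b3, c3, d3, e3]
    linarith
  · obtain ⟨a1, b1, c1, d1, e1⟩ := small_vals h1
    obtain ⟨a2, b2, c2, d2, e2⟩ := small_vals h2
    obtain ⟨a3, b3, c3⟩ := big_vals h3
    have := two_small_linear hx hy h3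
    simp only [a1, b1, c1, d1, e1, a2, b2, c2, d2, e2, a3, b3, c3]
    linarith
  · obtain ⟨a1, b1, c1, d1, e1⟩ := small_vals h1
    obtain ⟨a2, b2, c2⟩ := big_vals h2
    obtain ⟨a3, b3, c3, d3, e3⟩ := small_vals h3
    have := two_small_linear hx hz h2
    rw [(by ring : x + z + y = x + y + z)] at this
    simp only [a1, b1, c1, d1, e1, a2, b2, c2, a3, b3, c3, d3, e3]
    linarith
  · obtain ⟨a1, b1, c1, d1, e1⟩ := small_vals h1
    obtain ⟨a2, b2, c2⟩ := big_vals h2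
    obtain ⟨a3, b3, c3⟩ := big_vals h3
    simp only [a1, b1, c1, d1, e1, a2, b2, c2, a3, b3, c3]
    linarith
  · obtain ⟨a1, b1, c1⟩ := big_vals h1
    obtain ⟨a2, b2, c2, d2, e2⟩ := small_vals h2
    obtain ⟨a3, b3, c3, d3, e3⟩ := small_vals h3
    have := two_small_linear hy hz h1
    rw [(by ring : y + z + x = x + y + z)] at this
    simp only [a1, b1, c1, a2, b2, c2, d2, e2, a3, b3, c3, d3, e3]
    linarith
  · obtain ⟨a1, b1, c1⟩ := big_vals h1
    obtain ⟨a2, b2, c2, d2, e2⟩ := small_vals h2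
    obtain ⟨a3, b3, c3⟩ := big_vals h3
    simp only [a1, b1, c1, a2, b2, c2, d2, e2, a3, b3, c3]
    linarith
  · obtain ⟨a1, b1, c1⟩ := big_vals h1
    obtain ⟨a2, b2, c2⟩ := big_vals h2
    obtain ⟨a3, b3, c3, d3, e3⟩ := small_vals h3
    simp only [a1, b1, c1, a2, b2, c2, a3, b3, c3, d3, e3]
    linarith
  · obtain ⟨a1, b1, c1⟩ := big_vals h1
    obtain ⟨a2, b2, c2⟩ := big_vals h2
    obtain ⟨a3, b3, c3⟩ := big_vals h3
    simp only [a1, b1, c1, a2, b2, c2, a3, b3, c3]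
    linarith

/-- The part of the multilinear lower bound coming from two small entries and one big entry. -/
noncomputable def twoSmallForm (x y z : ℝ) : ℝ :=
  smallInd x * smallInd y * bigInd z
    - (smallInd x - smallGap x) * (smallInd y - smallGap y) * (bigInd z - midExcess z)
    - (smallInd x - smallGap x) * smallInd y * midExcess z
    - smallInd x * (smallInd y - smallGap y) * midExcess z
    - smallInd x * smallInd y * topExcess z

/-- The part of the multilinear lower bound coming from one small entry and two big entries. -/
noncomputable def oneSmallForm (x y z : ℝ) : ℝ :=
  smallGap x * bigInd y * bigInd z - smallInd x * midExcess y * bigInd z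
    - smallInd x * bigInd y * midExcess z

lemma indicator_ge_multilinear {x y z θ : ℝ} (hx : 0 ≤ x) (hy : 0 ≤ y) (hz : 0 ≤ z)
    (hθ : θ = 0 ∨ θ = 1) :
    smallInd x * smallInd y * smallInd z
      + (twoSmallForm x y z + twoSmallForm x z y + twoSmallForm y z x)
      + θ * (oneSmallForm x y z + oneSmallForm y x z + oneSmallForm z x y)
      ≤ if x + y + z < 1 then (1 : ℝ) else 0 := by
  have hI : (0 : ℝ) ≤ if x + y + z < 1 then (1 : ℝ) else 0 := by split_ifs <;> norm_num
  rcases lt_or_ge x (1 / 3) with h1 | h1 <;> rcases lt_or_ge y (1 / 3) with h2 | h2 <;>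
    rcases lt_or_ge z (1 / 3) with h3 | h3
  · obtain ⟨a1, b1, c1, d1, e1⟩ := small_vals h1
    obtain ⟨a2, b2, c2, d2, e2⟩ := small_vals h2
    obtain ⟨a3, b3, c3, d3, e3⟩ := small_vals h3
    rw [if_pos (by linarith)]
    simp only [twoSmallForm, oneSmallForm, a1, b1, c1, d1, e1, a2, b2, c2, d2, e2, a3, b3, c3, d3, e3]
    linarith
  · obtain ⟨a1, b1, c1, d1, e1⟩ := small_vals h1
    obtain ⟨a2, b2, c2, d2, e2⟩ := small_vals h2
    obtain ⟨a3, b3, c3⟩ := big_vals h3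
    have := two_small_multilinear hx hy h1 h2 h3
    simp only [twoSmallForm, oneSmallForm, a1, b1, c1, d1, e1, a2, b2, c2, d2, e2, a3, b3, c3]
    linarith
  · obtain ⟨a1, b1, c1, d1, e1⟩ := small_vals h1
    obtain ⟨a2, b2, c2⟩ := big_vals h2
    obtain ⟨a3, b3, c3, d3, e3⟩ := small_vals h3
    have := two_small_multilinear hx hz h1 h3 h2
    rw [(by ring : x + z + y = x + y + z)] at this
    simp only [twoSmallForm, oneSmallForm, a1, b1, c1, d1, e1, a2, b2, c2, a3, b3, c3, d3, e3]
    linarith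
  · obtain ⟨a1, b1, c1, d1, e1⟩ := small_vals h1
    obtain ⟨a2, b2, c2⟩ := big_vals h2
    obtain ⟨a3, b3, c3⟩ := big_vals h3
    have := one_small hx h2 h3
    simp only [twoSmallForm, oneSmallForm, a1, b1, c1, d1, e1, a2, b2, c2, a3, b3, c3]
    rcases hθ with rfl | rfl <;> linarith
  · obtain ⟨a1, b1, c1⟩ := big_vals h1
    obtain ⟨a2, b2, c2, d2, e2⟩ := small_vals h2
    obtain ⟨a3, b3, c3, d3, e3⟩ := small_vals h3
    have := two_small_multilinear hy hz h2 h3 h1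
    rw [(by ring : y + z + x = x + y + z)] at this
    simp only [twoSmallForm, oneSmallForm, a1, b1, c1, a2, b2, c2, d2, e2, a3, b3, c3, d3, e3]
    linarith
  · obtain ⟨a1, b1, c1⟩ := big_vals h1
    obtain ⟨a2, b2, c2, d2, e2⟩ := small_vals h2
    obtain ⟨a3, b3, c3⟩ := big_vals h3
    have := one_small hy h1 h3
    rw [(by ring : y + x + z = x + y + z)] at this
    simp only [twoSmallForm, oneSmallForm, a1, b1, c1, a2, b2, c2, d2, e2, a3, b3, c3]
    rcases hθ with rfl | rfl <;> linarith
  · obtain ⟨a1, b1, c1⟩ := big_vals h1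
    obtain ⟨a2, b2, c2⟩ := big_vals h2
    obtain ⟨a3, b3, c3, d3, e3⟩ := small_vals h3
    have := one_small hz h1 h2
    rw [(by ring : z + x + y = x + y + z)] at this
    simp only [twoSmallForm, oneSmallForm, a1, b1, c1, a2, b2, c2, a3, b3, c3, d3, e3]
    rcases hθ with rfl | rfl <;> linarith
  · obtain ⟨a1, b1, c1⟩ := big_vals h1
    obtain ⟨a2, b2, c2⟩ := big_vals h2
    obtain ⟨a3, b3, c3⟩ := big_vals h3
    simp only [twoSmallForm, oneSmallForm, a1, b1, c1, a2, b2, c2, a3, b3, c3]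
    linarith

lemma smallInd_markov {x γ : ℝ} (hx : 0 ≤ x) :
    3 * γ * (smallInd x - if x < γ then 1 else 0) ≤ smallInd x - smallGap x := by
  rcases lt_or_ge x (1 / 3) with h | h
  · obtain ⟨a1, -, c1, -, -⟩ := small_vals h
    rw [a1, c1]; split_ifs <;> linarith
  · obtain ⟨a1, -, c1⟩ := big_vals h
    rw [a1, c1]; split_ifs <;> linarith

lemma sum_mul_mul {ι : Type*} [Fintype ι] (f g h : ι → ℝ) :
    ∑ i, ∑ j, ∑ k, f i * g j * h k = (∑ i, f i) * (∑ j, g j) * ∑ k, h k := by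
  simp only [← Finset.mul_sum, ← Finset.sum_mul]

/-- Stability of the three-variable Samuels inequality for identically distributed
variables of mean at most `1/4`. -/
theorem small_values_of_few_light_triples {ι : Type*} [Fintype ι] (c : ι → ℝ) (hc : ∀ i, 0 ≤ c i)
    (hmean : ∑ i, c i ≤ (Fintype.card ι : ℝ) / 4) {γ τ : ℝ} (hγ : 0 < γ) (hγ1 : γ ≤ 1)
    (hτγ : 10 * τ ≤ γ ^ 2) (hτ1 : τ ≤ 1 / 200)
    (hT : ∑ i, ∑ j, ∑ k, (if c i + c j + c k < 1 then (1 : ℝ) else 0) ≤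
      (27 / 64 + τ) * (Fintype.card ι : ℝ) ^ 3) :
    (3 / 4 - γ) * (Fintype.card ι : ℝ) ≤ ((Finset.univ.filter (fun i => c i < γ)).card : ℝ) := by
  rcases isEmpty_or_nonempty ι with hι | hι
  · simp
  set N : ℝ := (Fintype.card ι : ℝ) with hN
  have hN0 : 0 < N := by rw [hN]; exact_mod_cast Fintype.card_pos
  set Q := ∑ i, smallInd (c i) with hQ
  set G := ∑ i, bigInd (c i) with hG
  set Z := ∑ i, smallGap (c i) with hZ
  set Y := ∑ i, midExcess (c i) with hY
  set W := ∑ i, topExcess (c i) with hW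
  set T := ∑ i, ∑ j, ∑ k, (if c i + c j + c k < 1 then (1 : ℝ) else 0) with hTdef
  have hQG : Q + G = N := by
    rw [hQ, hG, ← Finset.sum_add_distrib, hN, ← Finset.card_univ, Finset.cast_card]
    refine Finset.sum_congr rfl fun i _ => ?_
    unfold smallInd bigInd; split_ifs <;> simp
  have hG0 : 0 ≤ G := Finset.sum_nonneg fun i _ => by unfold bigInd; split_ifs <;> simp
  have hQ0 : 0 ≤ Q := Finset.sum_nonneg fun i _ => by unfold smallInd; split_ifs <;> simp
  have hY0 : 0 ≤ Y := Finset.sum_nonneg fun i _ => by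
    unfold midExcess; split_ifs with h
    · exact le_rfl
    · exact le_min (by linarith) (by norm_num)
  have hW0 : 0 ≤ W := Finset.sum_nonneg fun i _ => by
    unfold topExcess; split_ifs with h
    · exact le_rfl
    · exact le_min (le_max_right _ _) (by norm_num)
  have hZQ : Z ≤ Q := Finset.sum_le_sum fun i _ => by
    unfold smallGap smallInd; split_ifs with h
    · linarith [hc i]
    · exact le_rfl
  have hm : N - Z + Y + W ≤ 3 / 4 * N := by
    have : Q - Z + G + Y + W ≤ 3 * ∑ i, c i := by
      rw [hQ, hG, hZ, hY, hW, ← Finset.sum_sub_distrib, ← Finset.sum_add_distrib,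
        ← Finset.sum_add_distrib, ← Finset.sum_add_distrib, Finset.mul_sum]
      refine Finset.sum_le_sum fun i _ => ?_
      rcases lt_or_ge (c i) (1 / 3) with h | h
      · obtain ⟨a1, b1, c1, d1, e1⟩ := small_vals h
        rw [a1, b1, c1, d1, e1]; linarith
      · rcases excess_cases h with ⟨h', h1, h2⟩ | ⟨h', h'', h1, h2⟩ | ⟨h', h1, h2⟩ <;>
          simp only [smallInd, smallGap, bigInd, if_neg h.not_gt, h1, h2] <;> linarith
    linarith
  have hcube : Q ^ 3 ≤ T := by
    have : Q ^ 3 = ∑ i, ∑ j, ∑ k, smallInd (c i) * smallInd (c j) * smallInd (c k) := by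
      rw [sum_mul_mul]; ring
    rw [this]
    refine Finset.sum_le_sum fun i _ => Finset.sum_le_sum fun j _ => Finset.sum_le_sum fun k _ => ?_
    unfold smallInd
    split_ifs <;> linarith
  have hlin : Q ^ 3 + 3 * Z * Q * G - 3 / 2 * Q ^ 2 * (Y + W) ≤ T := by
    have key := Finset.sum_le_sum fun i (_ : i ∈ Finset.univ) =>
      Finset.sum_le_sum fun j (_ : j ∈ Finset.univ) =>
      Finset.sum_le_sum fun k (_ : k ∈ Finset.univ) => indicator_ge_linear (hc i) (hc j) (hc k)
    refine le_trans (le_of_eq ?_) key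
    simp only [Finset.sum_add_distrib, Finset.sum_sub_distrib, ← Finset.mul_sum, ← Finset.sum_mul]
    simp only [← hQ, ← hG, ← hZ, ← hY, ← hW]
    ring
  have hmul : ∀ θ : ℝ, θ = 0 ∨ θ = 1 → Q ^ 3 + 3 * (Q ^ 2 * G - (Q - Z) ^ 2 * (G - Y)
      - 2 * (Q - Z) * Q * Y - Q ^ 2 * W) + θ * (3 * (G ^ 2 * Z - 2 * G * Q * Y)) ≤ T := by
    intro θ hθ
    have key := Finset.sum_le_sum fun i (_ : i ∈ Finset.univ) =>
      Finset.sum_le_sum fun j (_ : j ∈ Finset.univ) =>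
      Finset.sum_le_sum fun k (_ : k ∈ Finset.univ) =>
        indicator_ge_multilinear (hc i) (hc j) (hc k) hθ
    refine le_trans (le_of_eq ?_) key
    simp only [twoSmallForm, oneSmallForm, Finset.sum_add_distrib, Finset.sum_sub_distrib,
      ← Finset.mul_sum, ← Finset.sum_mul]
    simp only [← hQ, ← hG, ← hZ, ← hY, ← hW]
    ring
  have hGN : G = N - Q := by linarith
  have hscale : ∀ {a b : ℝ}, a * N ^ 3 ≤ b → a ≤ b / N ^ 3 := fun h => by
    rwa [le_div_iff₀ (by positivity)]
  obtain ⟨r1, r2⟩ := near_extremal (q := Q / N) (ζ := Z / N) (η := Y / N) (ξ := W / N)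
    (T := T / N ^ 3) (τ := τ)
    (by gcongr) (by positivity) (by positivity)
    (by
      have : 1 / 4 + Y / N + W / N = (N / 4 + Y + W) / N := by field_simp
      rw [this]; gcongr; linarith)
    (hscale (by
      have : (Q / N) ^ 3 * N ^ 3 = Q ^ 3 := by field_simp
      rwa [this]))
    (hscale (by
      rw [hGN] at hlin
      refine le_trans (le_of_eq ?_) hlin
      field_simp))
    (hscale (by
      have := hmul 0 (Or.inl rfl)
      rw [hGN] at this
      refine le_trans (le_of_eq ?_) this
      field_simp; ring))
    (hscale (by
      have := hmul 1 (Or.inr rfl)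
      rw [hGN] at this
      refine le_trans (le_of_eq ?_) this
      field_simp))
    (by rwa [div_le_iff₀ (by positivity)]) hτ1
  have r1' : (3 / 4 - 2 * τ) * N ≤ Q := by rwa [le_div_iff₀ hN0] at r1
  have r2' : Q - Z ≤ 15 * τ * N := by
    rwa [← sub_div, div_le_iff₀ hN0] at r2
  have hmk : 3 * γ * (Q - ((Finset.univ.filter (fun i => c i < γ)).card : ℝ)) ≤ Q - Z := by
    rw [Finset.natCast_card_filter, hQ, hZ, ← Finset.sum_sub_distrib, ← Finset.sum_sub_distrib,
      Finset.mul_sum]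
    exact Finset.sum_le_sum fun i _ => smallInd_markov (hc i)
  have : 3 * γ * (Q - ((Finset.univ.filter (fun i => c i < γ)).card : ℝ)) ≤ 3 * γ * (γ / 2 * N) := by
    nlinarith
  have := le_of_mul_le_mul_left this (by positivity)
  have : 2 * τ ≤ γ / 2 := by nlinarith
  nlinarith

/-- The total weight at a vertex `v` of a weighting `w` of the edges of `H`. -/
def load {V : Type*} [DecidableEq V] (H : Finset (Finset V)) (w : Finset V → ℝ) (v : V) : ℝ :=
  ∑ e ∈ H with v ∈ e, w e

lemma load_add_smul {V : Type*} [DecidableEq V] (H : Finset (Finset V)) (w d : Finset V → ℝ)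
    (t : ℝ) (v : V) : load H (w + t • d) v = load H w v + t * load H d v := by
  simp [load, Finset.sum_add_distrib, Finset.mul_sum]

lemma nonpos_of_forall_le_mul {a b : ℝ} (h : ∀ t : ℝ, 0 < t → t ≤ 1 → a ≤ t * b) : a ≤ 0 := by
  by_contra! ha
  have hb : 0 < b := by have := h 1 one_pos le_rfl; linarith
  have h1 := h (min 1 (a / (2 * b))) (by positivity) (min_le_left _ _)
  have h2 : min 1 (a / (2 * b)) * b ≤ a / (2 * b) * b := by gcongr; exact min_le_right _ _
  have h3 : a / (2 * b) * b = a / 2 := by field_simp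
  linarith

/-- The edge weighting with values in `[0, κ]` minimising the `ℓ²`-deficiency. -/
lemma exists_optimal_weight {V : Type*} [Fintype V] [DecidableEq V] (H : Finset (Finset V)) {κ : ℝ}
    (hκ : 0 ≤ κ) : ∃ w : Finset V → ℝ, (∀ e, 0 ≤ w e) ∧ (∀ e, w e ≤ κ) ∧
      (∀ e ∈ H, 0 < ∑ v ∈ e, (1 - load H w v) → w e = κ) ∧
      ∑ v, (1 - load H w v) ^ 2 ≤ ∑ v, (1 - load H w v) := by
  let S : Set (Finset V → ℝ) := Set.univ.pi fun _ => Set.Icc 0 κ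
  have hS : IsCompact S := isCompact_univ_pi fun _ => isCompact_Icc
  have hne : S.Nonempty := ⟨fun _ => 0, fun _ _ => ⟨le_rfl, hκ⟩⟩
  obtain ⟨w, hw, hmin⟩ := hS.exists_isMinOn hne
    (f := fun w => ∑ v, (1 - load H w v) ^ 2) (by unfold load; fun_prop)
  have hvar : ∀ d : Finset V → ℝ, w + d ∈ S → ∑ v, (1 - load H w v) * load H d v ≤ 0 := by
    intro d hd
    have : 2 * ∑ v, (1 - load H w v) * load H d v ≤ 0 := by
      refine nonpos_of_forall_le_mul (b := ∑ v, load H d v ^ 2) fun t ht ht1 => ?_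
      have hmem : w + t • d ∈ S := by
        intro e he
        have h1 := hw e he
        have h2 := hd e he
        simp only [Set.mem_Icc, Pi.add_apply, Pi.smul_apply, smul_eq_mul] at h1 h2 ⊢
        constructor <;> nlinarith
      have := hmin hmem
      simp only [Set.mem_ofPred_eq, load_add_smul] at this
      have hexp : ∑ v, (1 - (load H w v + t * load H d v)) ^ 2 = ∑ v, (1 - load H w v) ^ 2
          - t * (2 * ∑ v, (1 - load H w v) * load H d v) + t * (t * ∑ v, load H d v ^ 2) := by
        simp only [Finset.mul_sum, ← Finset.sum_sub_distrib, ← Finset.sum_add_distrib]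
        exact Finset.sum_congr rfl fun v _ => by ring
      rw [hexp] at this
      exact le_of_mul_le_mul_left (by linarith) ht
    linarith
  refine ⟨w, fun e => (hw e trivial).1, fun e => (hw e trivial).2, fun e he hpos => ?_, ?_⟩
  · have h := hvar (Pi.single e (κ - w e)) (by
      intro e' he'
      rcases eq_or_ne e' e with rfl | hne
      · simpa using hκ
      · simpa [hne] using hw e' he')
    have hl : ∀ v, load H (Pi.single e (κ - w e)) v = if v ∈ e then κ - w e else 0 := by
      intro v
      simp [load, Pi.single_apply, Finset.sum_ite_eq', he]
    simp only [hl, mul_ite, mul_zero, Finset.sum_ite_mem, Finset.univ_inter,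
      ← Finset.sum_mul] at h
    have := (hw e trivial).2
    nlinarith
  · have h := hvar (-w) (fun e _ => by simpa using hκ)
    have hl : ∀ v, load H (-w) v = - load H w v := by simp [load]
    simp only [hl] at h
    rw [← sub_nonpos, ← Finset.sum_sub_distrib]
    refine le_trans (le_of_eq (Finset.sum_congr rfl fun v _ => ?_)) h
    ring

section Partite

variable {X U : Type*} [DecidableEq X] [DecidableEq U]

/-- The edge `{x} ∪ s` of a `(1,k)`-partite hypergraph. -/
def pEdge (x : X) (s : Finset U) : Finset (X ⊕ U) := insert (Sum.inl x) (s.image Sum.inr)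

@[simp] lemma inl_mem_pEdge {x y : X} {s : Finset U} : Sum.inl y ∈ pEdge x s ↔ y = x := by
  simp [pEdge]

@[simp] lemma inr_mem_pEdge {x : X} {v : U} {s : Finset U} : Sum.inr v ∈ pEdge x s ↔ v ∈ s := by
  simp [pEdge]

lemma pEdge_inj {x y : X} {s t : Finset U} (h : pEdge x s = pEdge y t) : x = y ∧ s = t := by
  constructor
  · rw [← inl_mem_pEdge (s := t), ← h]; simp
  · ext v
    rw [← inr_mem_pEdge (x := x), h, inr_mem_pEdge]

lemma sum_pEdge (x : X) (s : Finset U) (f : X ⊕ U → ℝ) :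
    ∑ v ∈ pEdge x s, f v = f (Sum.inl x) + ∑ u ∈ s, f (Sum.inr u) := by
  rw [pEdge, Finset.sum_insert (by simp), Finset.sum_image (by simp)]

variable [Fintype U]

/-- The link of `x`: the `4`-sets which form an edge together with `x`. -/
def link (H : Finset (Finset (X ⊕ U))) (x : X) : Finset (Finset U) :=
  (Finset.powersetCard 4 Finset.univ).filter fun s => pEdge x s ∈ H

lemma mem_link {H : Finset (Finset (X ⊕ U))} {x : X} {s : Finset U} :
    s ∈ link H x ↔ s.card = 4 ∧ pEdge x s ∈ H := by
  simp [link]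

lemma pdeg_eq_card_link {H : Finset (Finset (X ⊕ U))}
    (hH : ∀ e ∈ H, ∃ (x : X) (s : Finset U), s.card = 4 ∧ e = pEdge x s) (x : X) (v : U) :
    (H.filter (fun e => Sum.inl x ∈ e ∧ Sum.inr v ∈ e)).card =
      ((link H x).filter (fun s => v ∈ s)).card := by
  symm
  refine Finset.card_bij (fun s _ => pEdge x s) ?_ (fun s _ t _ h => (pEdge_inj h).2) ?_
  · intro s hs
    simp only [Finset.mem_filter, mem_link] at hs
    simp [hs]
  · intro e he
    simp only [Finset.mem_filter] at he
    obtain ⟨y, s, hs, rfl⟩ := hH e he.1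
    simp only [inl_mem_pEdge, inr_mem_pEdge] at he
    obtain ⟨h1, rfl, h3⟩ := he
    exact ⟨s, by simp [mem_link, *], rfl⟩

/-- Positive edges carry the full weight, so they are few at every vertex of `X`. -/
lemma card_positive_link_le {H : Finset (Finset (X ⊕ U))} {w : Finset (X ⊕ U) → ℝ} {κ : ℝ}
    (hw : ∀ e, 0 ≤ w e)
    (hpos : ∀ e ∈ H, 0 < ∑ v ∈ e, (1 - load H w v) → w e = κ) (x : X) :
    κ * (((link H x).filter fun s => 0 < ∑ v ∈ pEdge x s, (1 - load H w v)).card : ℝ) ≤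
      load H w (Sum.inl x) := by
  set P := (link H x).filter fun s => 0 < ∑ v ∈ pEdge x s, (1 - load H w v) with hP
  have h1 : κ * (P.card : ℝ) = ∑ e ∈ P.image (pEdge x), w e := by
    rw [Finset.sum_image fun s _ t _ h => (pEdge_inj h).2, Finset.sum_congr rfl (g := fun _ => κ),
      Finset.sum_const, nsmul_eq_mul, mul_comm]
    intro s hs
    simp only [hP, Finset.mem_filter, mem_link] at hs
    exact hpos _ hs.1.2 hs.2
  rw [h1, load]
  refine Finset.sum_le_sum_of_subset_of_nonneg ?_ fun e _ _ => hw e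
  intro e he
  obtain ⟨s, hs, rfl⟩ := Finset.mem_image.1 he
  simp only [hP, Finset.mem_filter, mem_link] at hs
  simp [hs.1.2]

lemma sum_card_filter_mem {S : Finset (Finset U)} {k : ℕ} (hS : ∀ s ∈ S, s.card = k) :
    ∑ v, (S.filter (fun s => v ∈ s)).card = k * S.card := by
  simp only [Finset.card_filter]
  rw [Finset.sum_comm]
  simp only [Finset.sum_boole, Nat.cast_id]
  rw [Finset.sum_congr rfl (g := fun _ => k), Finset.sum_const, smul_eq_mul, mul_comm]
  intro s hs
  simpa using hS s hs

end Partite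

/-- If the total deficiency is large, the deficiencies can be renormalised to a fractional
cover-like pair `(d, c)` anchored at vertices `x₀, v₀` lying in few positive edges. -/
lemma exists_anchored_cover {X U : Type*} [Fintype X] [Nonempty X] [Fintype U] [DecidableEq U]
    {m : ℕ} (hX : Fintype.card X = m) (hU : Fintype.card U = 4 * m) (L : X → Finset (Finset U))
    (hL : ∀ x, ∀ s ∈ L x, s.card = 4) {a : X → ℝ} {b : U → ℝ} (hb : ∀ v, b v ≤ 1)
    {κ K : ℝ} (hκ : 0 ≤ κ) (hK : 0 < K) (hKm : K ≤ m)
    (hpos : ∀ x, κ * (((L x).filter fun s => 0 < a x + ∑ u ∈ s, b u).card : ℝ) ≤ 1 - a x)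
    (hsum : 5 * K < ∑ x, a x + ∑ u, b u) :
    ∃ (x₀ : X) (v₀ : U) (c : U → ℝ) (d : X → ℝ), (∀ u, 0 ≤ c u) ∧ (∀ x, 0 ≤ d x) ∧
      d x₀ = 0 ∧ c v₀ = 0 ∧ ∑ u, c u + ∑ x, d x ≤ m ∧
      κ * K * (((L x₀).filter fun s => (0 < a x₀ + ∑ u ∈ s, b u) ∧ v₀ ∈ s).card : ℝ) ≤ 20 ∧
      (∀ x, ∀ s : Finset U, s.card = 4 → d x + ∑ u ∈ s, c u < 1 → 0 < a x + ∑ u ∈ s, b u) ∧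
      ∀ x, d x < 1 / 2 → -4 ≤ a x := by
  have hm : (0 : ℝ) < m := lt_of_lt_of_le hK hKm
  have ha : ∀ x, a x ≤ 1 := fun x => by
    have := hpos x
    have : 0 ≤ κ * (((L x).filter fun s => 0 < a x + ∑ u ∈ s, b u).card : ℝ) := by positivity
    linarith
  have hXR : (Fintype.card X : ℝ) = m := by exact_mod_cast hX
  have hUR : (Fintype.card U : ℝ) = 4 * m := by exact_mod_cast hU
  have hsa : ∑ x, a x ≤ m := by
    calc ∑ x, a x ≤ ∑ x : X, (1 : ℝ) := Finset.sum_le_sum fun x _ => ha x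
      _ = m := by simp [hXR]
  have hsb : ∑ u, b u ≤ 4 * m := by
    calc ∑ x, b x ≤ ∑ x : U, (1 : ℝ) := Finset.sum_le_sum fun x _ => hb x
      _ = 4 * m := by simp [hUR]
  obtain ⟨x₀, hx₀⟩ := Finite.exists_max a
  have hαm : ∑ x, a x ≤ m * a x₀ := by
    calc ∑ x, a x ≤ ∑ x : X, a x₀ := Finset.sum_le_sum fun x _ => hx₀ x
      _ = m * a x₀ := by simp [hXR]
  have hα : -4 < a x₀ := by
    by_contra! h
    have : m * a x₀ ≤ m * (-4) := by gcongr
    linarith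
  set P := (L x₀).filter fun s => 0 < a x₀ + ∑ u ∈ s, b u with hP
  have hPcard : κ * (P.card : ℝ) ≤ 5 := (hpos x₀).trans (by linarith)
  set pv : U → ℝ := fun v => ((P.filter fun s => v ∈ s).card : ℝ) with hpv
  have hpvsum : ∑ v, pv v = 4 * P.card := by
    have := sum_card_filter_mem (S := P) (k := 4) fun s hs => hL x₀ s (Finset.mem_filter.1 hs).1
    simp only [hpv]
    exact_mod_cast this
  set bad := Finset.univ.filter fun v => 20 < κ * K * pv v with hbad
  have hbadcard : (bad.card : ℝ) ≤ K := by
    have h1 : (bad.card : ℝ) * 20 ≤ ∑ v ∈ bad, κ * K * pv v := by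
      rw [← nsmul_eq_mul]
      exact Finset.card_nsmul_le_sum _ _ _ fun v hv => (Finset.mem_filter.1 hv).2.le
    have h2 : ∑ v ∈ bad, κ * K * pv v ≤ ∑ v, κ * K * pv v :=
      Finset.sum_le_sum_of_subset_of_nonneg (Finset.subset_univ _) fun v _ _ => by positivity
    rw [← Finset.mul_sum (s := Finset.univ), hpvsum] at h2
    have h3 : K * (κ * P.card) ≤ K * 5 := by gcongr
    linarith
  have hgoodcard : ((badᶜ).card : ℝ) = 4 * m - bad.card := by
    have := Finset.card_add_card_compl bad
    rw [← hUR, ← this]; push_cast; ring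
  have hgne : (badᶜ).Nonempty := by
    rw [← Finset.card_pos, ← Nat.cast_pos (α := ℝ)]
    linarith
  obtain ⟨v₀, hv₀, hv₀max⟩ := Finset.exists_max_image _ b hgne
  have hsplit : ∑ u ∈ bad, b u + ∑ u ∈ badᶜ, b u = ∑ u, b u := Finset.sum_add_sum_compl _ _
  have hbadsum : ∑ u ∈ bad, b u ≤ K := by
    refine le_trans ?_ hbadcard
    simpa using Finset.sum_le_card_nsmul bad b 1 fun u _ => hb u
  have hβ : -3 ≤ b v₀ := by
    by_contra! h
    have h1 : ∑ u ∈ badᶜ, b u ≤ (badᶜ).card * b v₀ := by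
      simpa using Finset.sum_le_card_nsmul badᶜ b (b v₀) hv₀max
    have h2 : ((badᶜ).card : ℝ) * b v₀ ≤ (badᶜ).card * (-3) := by gcongr
    linarith
  set c : U → ℝ := fun u => max (b v₀ - b u) 0 with hc
  have hcsum : ∑ u, c u ≤ 4 * m * b v₀ - ∑ u, b u + 4 * K := by
    have h1 : ∑ u, c u ≤ ∑ u, ((b v₀ - b u) + if u ∈ bad then 4 else 0) := by
      refine Finset.sum_le_sum fun u _ => ?_
      have := hb u
      have := hb v₀
      split_ifs with hu
      · exact max_le (by linarith) (by linarith)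
      · have := hv₀max u (by simpa using hu)
        exact max_le (by linarith) (by linarith)
    rw [Finset.sum_add_distrib, Finset.sum_sub_distrib] at h1
    simp only [Finset.sum_const, Finset.card_univ, hUR, nsmul_eq_mul, Finset.sum_ite_mem,
      Finset.univ_inter] at h1
    linarith
  have hdsum : ∑ x, (a x₀ - a x) = m * a x₀ - ∑ x, a x := by
    simp [hXR]
  have hc0 : ∀ u, 0 ≤ c u := fun u => le_max_right _ _
  have hd0 : ∀ x, 0 ≤ a x₀ - a x := fun x => sub_nonneg.2 (hx₀ x)
  set Λ := a x₀ + 4 * b v₀ with hΛ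
  have htot : ∑ u, c u + ∑ x, (a x₀ - a x) ≤ m * Λ := by
    rw [hdsum, hΛ]; linarith
  have hΛ0 : 0 < Λ := by
    have h1 : 0 ≤ ∑ u, c u := Finset.sum_nonneg fun u _ => hc0 u
    have h2 : 0 < m * Λ := by
      have : 0 ≤ ∑ x, (a x₀ - a x) := Finset.sum_nonneg fun u _ => hd0 u
      rw [hΛ]; linarith
    exact pos_of_mul_pos_right h2 hm.le
  refine ⟨x₀, v₀, fun u => c u / Λ, fun x => (a x₀ - a x) / Λ, fun u => div_nonneg (hc0 u) hΛ0.le,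
    fun x => div_nonneg (hd0 x) hΛ0.le, by simp, by simp [hc], ?_, ?_, ?_, ?_⟩
  · rw [← Finset.sum_div, ← Finset.sum_div, ← add_div, div_le_iff₀ hΛ0]
    exact htot
  · have := (Finset.mem_compl.1 hv₀)
    simp only [hbad, Finset.mem_filter, Finset.mem_univ, true_and, not_lt, hpv, hP,
      Finset.filter_filter] at this
    exact this
  · intro x s hs h
    rw [← Finset.sum_div, ← add_div, div_lt_one hΛ0] at h
    have : ∑ u ∈ s, (b v₀ - b u) ≤ ∑ u ∈ s, c u := Finset.sum_le_sum fun u _ => le_max_left _ _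
    rw [Finset.sum_sub_distrib, Finset.sum_const, hs, nsmul_eq_mul] at this
    push_cast at this
    linarith
  · intro x h
    rw [div_lt_iff₀ hΛ0] at h
    have := hb v₀
    linarith

lemma filter_mem_powersetCard_succ {U : Type*} [DecidableEq U] {B : Finset U} {v : U} (hv : v ∈ B)
    (k : ℕ) : ((B.powersetCard (k + 1)).filter (fun s => v ∈ s)) =
      ((B.erase v).powersetCard k).image (insert v) := by
  ext s
  simp only [Finset.mem_filter, Finset.mem_powersetCard, Finset.mem_image]
  constructor
  · rintro ⟨⟨h1, h2⟩, h3⟩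
    exact ⟨s.erase v, ⟨Finset.erase_subset_erase _ h1, by rw [Finset.card_erase_of_mem h3, h2]; rfl⟩,
      Finset.insert_erase h3⟩
  · rintro ⟨t, ⟨h1, h2⟩, rfl⟩
    refine ⟨⟨Finset.insert_subset hv (h1.trans (Finset.erase_subset _ _)), ?_⟩,
      Finset.mem_insert_self _ _⟩
    rw [Finset.card_insert_of_notMem fun h => Finset.notMem_erase v B (h1 h), h2]

lemma injOn_insert_erase {U : Type*} [DecidableEq U] (B : Finset U) (v : U) (k : ℕ) :
    Set.InjOn (insert v) (((B.erase v).powersetCard k : Finset (Finset U)) : Set (Finset U)) := by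
  intro s hs t ht h
  have hs' : v ∉ s := fun h => Finset.notMem_erase v B ((Finset.mem_powersetCard.1 hs).1 h)
  have ht' : v ∉ t := fun h => Finset.notMem_erase v B ((Finset.mem_powersetCard.1 ht).1 h)
  rw [← Finset.erase_insert hs', ← Finset.erase_insert ht']
  exact congrArg (fun s => s.erase v) h

lemma card_filter_mem_powersetCard {U : Type*} [DecidableEq U] {B : Finset U} {v : U} (hv : v ∈ B)
    (k : ℕ) : ((B.powersetCard (k + 1)).filter (fun s => v ∈ s)).card = (B.card - 1).choose k := by
  rw [filter_mem_powersetCard_succ hv, Finset.card_image_of_injOn (injOn_insert_erase B v k),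
    Finset.card_powersetCard, Finset.card_erase_of_mem hv]

lemma card_orderings_le_six {U : Type*} [Fintype U] [DecidableEq U] {t : Finset U}
    (ht : t.card = 3) :
    ((Finset.univ : Finset (U × U × U)).filter
      fun p => ({p.1, p.2.1, p.2.2} : Finset U) = t).card ≤ 6 := by
  obtain ⟨x, y, z, hxy, hxz, hyz, rfl⟩ := Finset.card_eq_three.1 ht
  refine (Finset.card_le_card (t := {(x, y, z), (x, z, y), (y, x, z), (y, z, x), (z, x, y),
    (z, y, x)}) ?_).trans Finset.card_le_six
  rintro ⟨i, j, k⟩ h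
  simp only [Finset.mem_filter, Finset.mem_univ, true_and] at h
  have hi : i ∈ ({x, y, z} : Finset U) := h ▸ by simp
  have hj : j ∈ ({x, y, z} : Finset U) := h ▸ by simp
  have hk : k ∈ ({x, y, z} : Finset U) := h ▸ by simp
  have hx : x ∈ ({i, j, k} : Finset U) := h ▸ by simp
  have hy : y ∈ ({i, j, k} : Finset U) := h ▸ by simp
  have hz : z ∈ ({i, j, k} : Finset U) := h ▸ by simp
  simp only [Finset.mem_insert, Finset.mem_singleton, Prod.mk.injEq] at *
  grind

lemma sum_light_triples_le {U : Type*} [Fintype U] [DecidableEq U] (c : U → ℝ) (v : U) :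
    ∑ i, ∑ j, ∑ k, (if c i + c j + c k < 1 then (1 : ℝ) else 0) ≤
      6 * ((((Finset.univ.erase v).powersetCard 3).filter fun t => ∑ u ∈ t, c u < 1).card : ℝ)
        + 6 * (Fintype.card U : ℝ) ^ 2 := by
  set G := (Finset.univ : Finset (U × U × U)).filter fun p => c p.1 + c p.2.1 + c p.2.2 < 1 ∧
    p.1 ≠ p.2.1 ∧ p.1 ≠ p.2.2 ∧ p.2.1 ≠ p.2.2 ∧ p.1 ≠ v ∧ p.2.1 ≠ v ∧ p.2.2 ≠ v with hG
  set S := ((Finset.univ.erase v).powersetCard 3).filter fun t => ∑ u ∈ t, c u < 1 with hS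
  have hGS : G.card ≤ 6 * S.card := by
    have hmap : ∀ p ∈ G, ({p.1, p.2.1, p.2.2} : Finset U) ∈ S := by
      rintro ⟨i, j, k⟩ hp
      simp only [hG, Finset.mem_filter, Finset.mem_univ, true_and] at hp
      obtain ⟨h0, h1, h2, h3, h4, h5, h6⟩ := hp
      simp only [hS, Finset.mem_filter, Finset.mem_powersetCard]
      refine ⟨⟨?_, Finset.card_eq_three.2 ⟨i, j, k, h1, h2, h3, rfl⟩⟩, ?_⟩
      · intro u hu
        simp only [Finset.mem_insert, Finset.mem_singleton] at hu
        rcases hu with rfl | rfl | rfl <;> simp [*]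
      · rw [Finset.sum_insert (by simp [h1, h2]), Finset.sum_insert (by simp [h3]),
          Finset.sum_singleton]
        linarith
    rw [Finset.card_eq_sum_card_fiberwise hmap, mul_comm]
    refine Finset.sum_le_card_nsmul _ _ _ fun t ht => ?_
    refine (Finset.card_le_card ?_).trans
      (card_orderings_le_six (Finset.mem_powersetCard.1 (Finset.mem_filter.1 ht).1).2)
    exact Finset.filter_subset_filter _ (Finset.subset_univ _)
  have hpt : ∀ i j k, (if c i + c j + c k < 1 then (1 : ℝ) else 0) ≤
      (if (i, j, k) ∈ G then 1 else 0) + ((if i = j then 1 else 0) + (if i = k then 1 else 0)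
        + (if j = k then 1 else 0) + (if i = v then 1 else 0) + (if j = v then 1 else 0)
        + (if k = v then 1 else 0)) := by
    intro i j k
    have hmem : (i, j, k) ∈ G ↔ c i + c j + c k < 1 ∧
      i ≠ j ∧ i ≠ k ∧ j ≠ k ∧ i ≠ v ∧ j ≠ v ∧ k ≠ v := by simp [hG]
    have h0 : ∀ (p : Prop) [Decidable p], (0 : ℝ) ≤ if p then 1 else 0 := fun p _ => by
      split_ifs <;> norm_num
    by_cases hlt : c i + c j + c k < 1
    · rw [if_pos hlt]
      have := h0 ((i, j, k) ∈ G)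
      have h1 := h0 (i = j)
      have h2 := h0 (i = k)
      have h3 := h0 (j = k)
      have h4 := h0 (i = v)
      have h5 := h0 (j = v)
      have h6 := h0 (k = v)
      by_cases e1 : i = j
      · rw [if_pos e1]; linarith
      by_cases e2 : i = k
      · rw [if_pos e2]; linarith
      by_cases e3 : j = k
      · rw [if_pos e3]; linarith
      by_cases e4 : i = v
      · rw [if_pos e4]; linarith
      by_cases e5 : j = v
      · rw [if_pos e5]; linarith
      by_cases e6 : k = v
      · rw [if_pos e6]; linarith
      rw [if_pos (hmem.2 ⟨hlt, e1, e2, e3, e4, e5, e6⟩)]; linarith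
    · rw [if_neg hlt]
      positivity
  have hsum := Finset.sum_le_sum fun i (_ : i ∈ Finset.univ) =>
    Finset.sum_le_sum fun j (_ : j ∈ Finset.univ) =>
    Finset.sum_le_sum fun k (_ : k ∈ Finset.univ) => hpt i j k
  refine hsum.trans ?_
  simp only [Finset.sum_add_distrib]
  have hGsum : ∑ i, ∑ j, ∑ k, (if (i, j, k) ∈ G then (1 : ℝ) else 0) = G.card := by
    simp only [← Fintype.sum_prod_type']
    simp
  rw [hGsum]
  have : (G.card : ℝ) ≤ 6 * S.card := by exact_mod_cast hGS
  simp only [Finset.sum_ite_eq, Finset.sum_ite_eq', Finset.mem_univ, if_true, Finset.sum_const,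
    Finset.card_univ, nsmul_eq_mul, mul_ite, mul_one, mul_zero]
  nlinarith

lemma card_light_triples_le {U : Type*} [Fintype U] [DecidableEq U] {c : U → ℝ} {v : U}
    (hcv : c v = 0) {L : Finset (Finset U)} (hL : ∀ s ∈ L, s.card = 4) (P : Finset U → Prop)
    [DecidablePred P] (hP : ∀ s : Finset U, s.card = 4 → ∑ u ∈ s, c u < 1 → P s) :
    (((Finset.univ.erase v).powersetCard 3).filter fun t => ∑ u ∈ t, c u < 1).card
      + (L.filter fun s => v ∈ s).card ≤
      (L.filter fun s => P s ∧ v ∈ s).card + (Fintype.card U - 1).choose 3 := by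
  set S := ((Finset.univ.erase v).powersetCard 3).filter fun t => ∑ u ∈ t, c u < 1 with hS
  set F := ((Finset.univ : Finset U).powersetCard 4).filter (fun s => v ∈ s) with hF
  have hFc : F.card = (Fintype.card U - 1).choose 3 :=
    card_filter_mem_powersetCard (Finset.mem_univ v) 3
  have hsub : L.filter (fun s => v ∈ s) ⊆ F := fun s hs => by
    simp only [Finset.mem_filter] at hs
    simp [hF, hs, hL s hs.1]
  have hinj : (S.image (insert v)).card = S.card :=
    Finset.card_image_of_injOn ((injOn_insert_erase Finset.univ v 3).mono
      (by rw [hS]; exact_mod_cast Finset.filter_subset _ _))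
  have himg : S.image (insert v) ⊆
      (L.filter fun s => P s ∧ v ∈ s) ∪ (F \ L.filter fun s => v ∈ s) := by
    intro s hs
    obtain ⟨t, ht, rfl⟩ := Finset.mem_image.1 hs
    simp only [hS, Finset.mem_filter] at ht
    have hv : v ∉ t := fun h => Finset.notMem_erase v _ ((Finset.mem_powersetCard.1 ht.1).1 h)
    have hc4 : (insert v t).card = 4 := by
      rw [Finset.card_insert_of_notMem hv, (Finset.mem_powersetCard.1 ht.1).2]
    have hPs := hP (insert v t) hc4 (by rw [Finset.sum_insert hv, hcv, zero_add]; exact ht.2)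
    by_cases h : insert v t ∈ L <;> simp [h, hPs, hF, hc4]
  have h1 := (Finset.card_le_card himg).trans (Finset.card_union_le _ _)
  have h2 := Finset.card_sdiff_add_card_eq_card hsub
  omega

lemma six_mul_choose_three_le (k : ℕ) : 6 * (k.choose 3 : ℝ) ≤ (k : ℝ) ^ 3 := by
  have := Nat.choose_le_pow_div (α := ℝ) 3 k
  have h6 : ((Nat.factorial 3 : ℕ) : ℝ) = 6 := by norm_num [Nat.factorial]
  rw [h6] at this
  linarith

/-- If the total deficiency is large, then `H` has few edges inside a set of about `3n/4`
vertices. -/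
lemma exists_sparse_part {X U : Type*} [Fintype X] [DecidableEq X] [Nonempty X] [Fintype U]
    [DecidableEq U] {m : ℕ} (hX : Fintype.card X = m) (hU : Fintype.card U = 4 * m)
    (L : X → Finset (Finset U)) (hL : ∀ x, ∀ s ∈ L x, s.card = 4) {a : X → ℝ} {b : U → ℝ}
    (hb : ∀ v, b v ≤ 1) {κ K : ℝ} (hκ : 0 < κ) (hK : 0 < K) (hKm : K ≤ m)
    (hpos : ∀ x, κ * (((L x).filter fun s => 0 < a x + ∑ u ∈ s, b u).card : ℝ) ≤ 1 - a x)
    (hsum : 5 * K < ∑ x, a x + ∑ u, b u) {n ρ γ τ : ℝ} (hn : n = 4 * m)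
    (hdeg : ∀ x v, ((4 * m - 1).choose 3 : ℝ) - ((3 * m).choose 3 : ℝ) - ρ * n ^ 3 ≤
      ((L x).filter fun s => v ∈ s).card)
    (hγ : 0 < γ) (hγ1 : γ ≤ 1 / 8) (hτγ : 10 * τ ≤ γ ^ 2)
    (hlarge : 6 * ρ * n ^ 3 + 120 / (κ * K) + 6 * n ^ 2 ≤ τ * n ^ 3) :
    ∃ (B : Finset U) (Y : Finset X), (3 / 4 - γ) * n ≤ B.card ∧ (Y.card : ℝ) ≤ 4 * γ * n ∧
      ∀ x ∉ Y, κ * (((L x).filter fun s => s ⊆ B).card : ℝ) ≤ 5 := by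
  obtain ⟨x₀, v₀, c, d, hc, hd, hdx, hcv, hcd, hfew, hposi, hax⟩ :=
    exists_anchored_cover hX hU L hL hb hκ.le hK hKm hpos hsum
  have hm : (0 : ℝ) < m := lt_of_lt_of_le hK hKm
  have hUn : (Fintype.card U : ℝ) = n := by rw [hn, hU]; push_cast; rfl
  have hn0 : 0 < n := by rw [hn]; positivity
  have hτ1 : τ ≤ 1 / 200 := by nlinarith
  have hcsum : ∑ u, c u ≤ n / 4 := by
    have : 0 ≤ ∑ x, d x := Finset.sum_nonneg fun x _ => hd x
    rw [hn]; linarith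
  have htri : ∑ i, ∑ j, ∑ k, (if c i + c j + c k < 1 then (1 : ℝ) else 0) ≤
      (27 / 64 + τ) * n ^ 3 := by
    have h1 := sum_light_triples_le c v₀
    have h2 := card_light_triples_le hcv (hL x₀) (fun s => 0 < a x₀ + ∑ u ∈ s, b u)
      fun s hs h => hposi x₀ s hs (by rw [hdx, zero_add]; exact h)
    rw [hU] at h2
    have h2' : ((((Finset.univ.erase v₀).powersetCard 3).filter fun t => ∑ u ∈ t, c u < 1).card : ℝ)
      + ((L x₀).filter fun s => v₀ ∈ s).card ≤
      ((L x₀).filter fun s => (0 < a x₀ + ∑ u ∈ s, b u) ∧ v₀ ∈ s).card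
        + ((4 * m - 1).choose 3 : ℝ) := by exact_mod_cast h2
    have h3 := hdeg x₀ v₀
    have h4 : (((L x₀).filter fun s => (0 < a x₀ + ∑ u ∈ s, b u) ∧ v₀ ∈ s).card : ℝ)
        ≤ 20 / (κ * K) := by
      rw [le_div_iff₀ (by positivity), mul_comm]; exact hfew
    have h5 := six_mul_choose_three_le (3 * m)
    have h6 : ((3 * m : ℕ) : ℝ) ^ 3 = 27 / 64 * n ^ 3 := by rw [hn]; push_cast; ring
    have h7 : 120 / (κ * K) = 6 * (20 / (κ * K)) := by ring
    rw [hUn] at h1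
    linarith
  set B := Finset.univ.filter fun u => c u < γ with hB
  have hBcard : (3 / 4 - γ) * n ≤ B.card := by
    rw [← hUn]
    exact small_values_of_few_light_triples c hc (by rw [hUn]; exact hcsum) hγ (by linarith) hτγ
      hτ1 (by rw [hUn]; exact htri)
  have hclow : (1 / 4 - 2 * γ) * n ≤ ∑ u, c u := by
    by_contra! h
    have := small_values_of_few_light_triples (fun u => c u + 2 * γ)
      (fun u => by have := hc u; positivity)
      (by
        rw [Finset.sum_add_distrib, Finset.sum_const, Finset.card_univ, nsmul_eq_mul, hUn]
        linarith) hγ (by linarith) hτγ hτ1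
      (by
        rw [hUn]
        refine le_trans ?_ htri
        refine Finset.sum_le_sum fun i _ => Finset.sum_le_sum fun j _ =>
          Finset.sum_le_sum fun k _ => ?_
        split_ifs <;> linarith)
    rw [Finset.filter_false_of_mem fun u _ => by have := hc u; linarith, hUn] at this
    simp only [Finset.card_empty, Nat.cast_zero] at this
    nlinarith
  have hdsum : ∑ x, d x ≤ 2 * γ * n := by
    rw [hn] at hclow ⊢; linarith
  refine ⟨B, Finset.univ.filter fun x => 1 / 2 ≤ d x, hBcard, ?_, fun x hx => ?_⟩
  · have h1 : (((Finset.univ.filter fun x => 1 / 2 ≤ d x).card : ℝ)) * (1 / 2) ≤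
        ∑ x ∈ Finset.univ.filter fun x => 1 / 2 ≤ d x, d x := by
      rw [← nsmul_eq_mul]
      exact Finset.card_nsmul_le_sum _ _ _ fun v hv => (Finset.mem_filter.1 hv).2
    have h2 : ∑ x ∈ Finset.univ.filter fun x => 1 / 2 ≤ d x, d x ≤ ∑ x, d x :=
      Finset.sum_le_sum_of_subset_of_nonneg (Finset.subset_univ _) fun v _ _ => hd v
    linarith
  · have hdx : d x < 1 / 2 := by simpa using hx
    refine le_trans ?_ ((hpos x).trans (by linarith [hax x hdx]))
    gcongr with s hs
    intro hsB
    refine hposi x s (hL x s hs) ?_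
    have : ∑ u ∈ s, c u < ∑ u ∈ s, γ := by
      refine Finset.sum_lt_sum_of_nonempty (Finset.card_pos.1 (by rw [hL x s hs]; norm_num))
        fun u hu => (Finset.mem_filter.1 (hsB hu)).2
    rw [Finset.sum_const, hL x s hs, nsmul_eq_mul] at this
    push_cast at this
    linarith

lemma card_missing_at_vertex {U : Type*} [Fintype U] [DecidableEq U] {m : ℕ}
    (hU : Fintype.card U = 4 * m) {L : Finset (Finset U)} (hL : ∀ s ∈ L, s.card = 4)
    {B : Finset U} (hB : B.card = 3 * m) {v : U} (hv : v ∈ B) {δ : ℝ}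
    (hdeg : ((4 * m - 1).choose 3 : ℝ) - ((3 * m).choose 3 : ℝ) - δ ≤
      (L.filter fun s => v ∈ s).card) :
    (((Finset.univ.powersetCard 4).filter fun s => v ∈ s ∧ ¬ s ⊆ B ∧ s ∉ L).card : ℝ) ≤
      (3 * m : ℝ) ^ 2 + δ + ((L.filter fun s => s ⊆ B).filter fun s => v ∈ s).card := by
  set F := ((Finset.univ : Finset U).powersetCard 4).filter (fun s => v ∈ s) with hF
  have hFc : F.card = (4 * m - 1).choose 3 := by
    rw [← hU]; exact card_filter_mem_powersetCard (Finset.mem_univ v) 3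
  set I := (B.powersetCard 4).filter (fun s => v ∈ s) with hI
  have hIc : I.card = (3 * m - 1).choose 3 := by
    rw [← hB]; exact card_filter_mem_powersetCard hv 3
  set M := (Finset.univ.powersetCard 4).filter fun s => v ∈ s ∧ ¬ s ⊆ B ∧ s ∉ L with hM
  set D := L.filter fun s => v ∈ s with hD
  set S := (L.filter fun s => s ⊆ B).filter fun s => v ∈ s with hS
  have hdisj : Disjoint M I := by
    rw [Finset.disjoint_left]
    intro s hs hs'
    simp only [hM, hI, Finset.mem_filter, Finset.mem_powersetCard] at hs hs'
    exact hs.2.2.1 hs'.1.1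
  have hdisj2 : Disjoint (M ∪ I) (D \ S) := by
    rw [Finset.disjoint_left]
    intro s hs hs'
    simp only [hM, hI, hD, hS, Finset.mem_union, Finset.mem_filter, Finset.mem_powersetCard,
      Finset.mem_sdiff] at hs hs'
    tauto
  have hsub : M ∪ I ∪ (D \ S) ⊆ F := by
    intro s hs
    simp only [hM, hI, hD, hS, hF, Finset.mem_union, Finset.mem_filter, Finset.mem_powersetCard,
      Finset.mem_sdiff, Finset.subset_univ, true_and] at hs ⊢
    have := hL s
    tauto
  have h1 := Finset.card_le_card hsub
  rw [Finset.card_union_of_disjoint hdisj2, Finset.card_union_of_disjoint hdisj, hFc, hIc] at h1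
  have h2 := Finset.card_le_card_sdiff_add_card (s := D) (t := S)
  have h3 : (3 * m).choose 3 ≤ (3 * m - 1).choose 3 + (3 * m) ^ 2 := by
    rcases Nat.eq_zero_or_pos m with rfl | hm
    · simp
    · obtain ⟨k, hk⟩ : ∃ k, 3 * m = k + 1 := ⟨3 * m - 1, by omega⟩
      have hp : (k + 1).choose 3 = k.choose 2 + k.choose 3 := Nat.choose_succ_succ' k 2
      rw [hk, Nat.add_sub_cancel]
      have := Nat.choose_le_pow k 2
      have : k ^ 2 ≤ (k + 1) ^ 2 := Nat.pow_le_pow_left (by omega) 2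
      omega
  have h1' : (M.card : ℝ) + ((3 * m - 1).choose 3 : ℝ) + ((D \ S).card : ℝ) ≤
    ((4 * m - 1).choose 3 : ℝ) := by exact_mod_cast h1
  have h2' : (D.card : ℝ) ≤ ((D \ S).card : ℝ) + S.card := by exact_mod_cast h2
  have h3' : ((3 * m).choose 3 : ℝ) ≤ ((3 * m - 1).choose 3 : ℝ) + (3 * m : ℝ) ^ 2 := by
    exact_mod_cast h3
  linarith

lemma card_missing_le {U : Type*} [Fintype U] [DecidableEq U] {m : ℕ}
    (hU : Fintype.card U = 4 * m) {L : Finset (Finset U)} (hL : ∀ s ∈ L, s.card = 4)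
    {B : Finset U} (hB : B.card = 3 * m) {δ : ℝ}
    (hdeg : ∀ v, ((4 * m - 1).choose 3 : ℝ) - ((3 * m).choose 3 : ℝ) - δ ≤
      (L.filter fun s => v ∈ s).card) :
    (((Finset.univ.powersetCard 4).filter
        fun s => (∃ v ∈ s, v ∈ B) ∧ ¬ s ⊆ B ∧ s ∉ L).card : ℝ) ≤
      3 * m * ((3 * m : ℝ) ^ 2 + δ) + 4 * (L.filter fun s => s ⊆ B).card := by
  have hsub : ((Finset.univ.powersetCard 4).filter fun s => (∃ v ∈ s, v ∈ B) ∧ ¬ s ⊆ B ∧ s ∉ L) ⊆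
      B.biUnion fun v => (Finset.univ.powersetCard 4).filter fun s => v ∈ s ∧ ¬ s ⊆ B ∧ s ∉ L := by
    intro s hs
    simp only [Finset.mem_filter, Finset.mem_biUnion] at hs ⊢
    obtain ⟨h1, ⟨v, hv, hvB⟩, h2, h3⟩ := hs
    exact ⟨v, hvB, h1, hv, h2, h3⟩
  have h1 : (((Finset.univ.powersetCard 4).filter
        fun s => (∃ v ∈ s, v ∈ B) ∧ ¬ s ⊆ B ∧ s ∉ L).card : ℝ) ≤
      ∑ v ∈ B, (((Finset.univ.powersetCard 4).filter
        fun s => v ∈ s ∧ ¬ s ⊆ B ∧ s ∉ L).card : ℝ) := by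
    exact_mod_cast (Finset.card_le_card hsub).trans Finset.card_biUnion_le
  have h2 := h1.trans (Finset.sum_le_sum fun v hv => card_missing_at_vertex hU hL hB hv (hdeg v))
  rw [Finset.sum_add_distrib, Finset.sum_const, hB, nsmul_eq_mul] at h2
  have h3 : ∑ v ∈ B, (((L.filter fun s => s ⊆ B).filter fun s => v ∈ s).card : ℝ) ≤
      4 * (L.filter fun s => s ⊆ B).card := by
    have := sum_card_filter_mem (S := L.filter fun s => s ⊆ B) (k := 4)
      fun s hs => hL s (Finset.mem_filter.1 hs).1
    have h4 : ∑ v ∈ B, ((L.filter fun s => s ⊆ B).filter fun s => v ∈ s).card ≤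
        ∑ v, ((L.filter fun s => s ⊆ B).filter fun s => v ∈ s).card :=
      Finset.sum_le_sum_of_subset (Finset.subset_univ _)
    rw [this] at h4
    exact_mod_cast h4
  push_cast at h2
  linarith

lemma card_four_sets_meeting_le {U : Type*} [Fintype U] [DecidableEq U] (D : Finset U) :
    ((Finset.univ.powersetCard 4).filter fun s => ∃ v ∈ s, v ∈ D).card ≤
      D.card * Fintype.card U ^ 3 := by
  have hsub : ((Finset.univ.powersetCard 4).filter fun s => ∃ v ∈ s, v ∈ D) ⊆
      D.biUnion fun v => (Finset.univ.powersetCard 4).filter fun s => v ∈ s := by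
    intro s hs
    simp only [Finset.mem_filter, Finset.mem_biUnion] at hs ⊢
    obtain ⟨h1, v, hv, hvB⟩ := hs
    exact ⟨v, hvB, h1, hv⟩
  refine (Finset.card_le_card hsub).trans (Finset.card_biUnion_le_card_mul _ _ _ fun v _ => ?_)
  rw [card_filter_mem_powersetCard (Finset.mem_univ v) 3]
  exact (Nat.choose_le_pow _ _).trans (Nat.pow_le_pow_left (Nat.sub_le _ _) 3)

lemma sum_inside_le {X U : Type*} [Fintype X] [DecidableEq X] [Fintype U] [DecidableEq U]
    {L : X → Finset (Finset U)} (hL : ∀ x, ∀ s ∈ L x, s.card = 4) {B B' : Finset U} {Y : Finset X}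
    {C : ℝ} (hC : 0 ≤ C) (hY : ∀ x ∉ Y, (((L x).filter fun s => s ⊆ B).card : ℝ) ≤ C) :
    ∑ x, (((L x).filter fun s => s ⊆ B').card : ℝ) ≤ Y.card * (Fintype.card U : ℝ) ^ 4 +
      Fintype.card X * (C + (B' \ B).card * (Fintype.card U : ℝ) ^ 3) := by
  have hpt : ∀ x, (((L x).filter fun s => s ⊆ B').card : ℝ) ≤
      (if x ∈ Y then (Fintype.card U : ℝ) ^ 4 else 0) +
        (C + (B' \ B).card * (Fintype.card U : ℝ) ^ 3) := by
    intro x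
    split_ifs with hx
    · have h1 : ((L x).filter fun s => s ⊆ B').card ≤ Fintype.card U ^ 4 := by
        refine (Finset.card_le_card (t := Finset.univ.powersetCard 4) fun s hs => ?_).trans ?_
        · simp [hL x s (Finset.mem_filter.1 hs).1]
        · rw [Finset.card_powersetCard]; exact Nat.choose_le_pow _ _
      have h2 : (((L x).filter fun s => s ⊆ B').card : ℝ) ≤ (Fintype.card U : ℝ) ^ 4 := by
        exact_mod_cast h1
      have : 0 ≤ ((B' \ B).card : ℝ) * (Fintype.card U : ℝ) ^ 3 := by positivity
      linarith
    · have hsub : ((L x).filter fun s => s ⊆ B') ⊆ ((L x).filter fun s => s ⊆ B) ∪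
          ((Finset.univ.powersetCard 4).filter fun s => ∃ v ∈ s, v ∈ B' \ B) := by
        intro s hs
        simp only [Finset.mem_filter, Finset.mem_union, Finset.mem_sdiff] at hs ⊢
        by_cases h : s ⊆ B
        · exact Or.inl ⟨hs.1, h⟩
        · obtain ⟨v, hv, hvB⟩ := Finset.not_subset.1 h
          exact Or.inr ⟨by simp [hL x s hs.1], v, hv, hs.2 hv, hvB⟩
      have h1 := ((Finset.card_le_card hsub).trans (Finset.card_union_le _ _)).trans
        (Nat.add_le_add_left (card_four_sets_meeting_le _) _)
      have h2 : (((L x).filter fun s => s ⊆ B').card : ℝ) ≤ ((L x).filter fun s => s ⊆ B).card +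
        (B' \ B).card * (Fintype.card U : ℝ) ^ 3 := by exact_mod_cast h1
      linarith [hY x hx]
  refine (Finset.sum_le_sum fun x _ => hpt x).trans (le_of_eq ?_)
  rw [Finset.sum_add_distrib, Finset.sum_ite_mem]
  simp
  ring

lemma exists_perm_initial {n m : ℕ} (hmn : m ≤ n) (A : Finset (Fin n)) (hA : A.card = m) :
    ∃ σ : Equiv.Perm (Fin n), ∀ v, ((σ v : Fin n) : ℕ) < m ↔ v ∈ A := by
  have hcard : Fintype.card {v : Fin n // v ∈ A} = Fintype.card {v : Fin n // (v : ℕ) < m} := by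
    rw [Fintype.card_coe, hA, Fintype.card_subtype]
    rw [Fin.card_filter_val_lt, min_eq_right hmn]
  let e := Fintype.equivOfCardEq hcard
  refine ⟨e.extendSubtype, fun v => ⟨fun h => ?_, fun h => e.extendSubtype_mem v h⟩⟩
  by_contra hv
  exact e.extendSubtype_not_mem v hv h

lemma exists_card_eq_sdiff_le {U : Type*} [Fintype U] [DecidableEq U] {B : Finset U} {k : ℕ} {g : ℝ}
    (hk : k ≤ Fintype.card U) (hg : 0 ≤ g) (hB : (k : ℝ) - g ≤ B.card) :
    ∃ B' : Finset U, B'.card = k ∧ ((B' \ B).card : ℝ) ≤ g := by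
  rcases le_total k B.card with h | h
  · obtain ⟨B', hsub, hc⟩ := Finset.exists_subset_card_eq h
    exact ⟨B', hc, by rw [Finset.sdiff_eq_empty_iff_subset.2 hsub]; simpa⟩
  · obtain ⟨B', hsub, hc⟩ := Finset.exists_superset_card_eq h hk
    refine ⟨B', hc, ?_⟩
    rw [Finset.cast_card_sdiff hsub, hc]
    linarith

lemma image_pEdge {X U : Type*} [DecidableEq X] [DecidableEq U] (σ : Equiv.Perm U) (x : X)
    (s : Finset U) :
    (pEdge x s).image (Equiv.sumCongr (Equiv.refl X) σ) = pEdge x (s.image σ) := by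
  simp [pEdge, Finset.image_insert, Finset.image_image, Function.comp_def]

lemma card_calHk_sdiff_le {n m : ℕ} (hm : n / 4 = m) {H : Finset (Finset (Fin (n / 4) ⊕ Fin n))}
    {B : Finset (Fin n)} {σ : Equiv.Perm (Fin n)} (hσ : ∀ v, ((σ v : Fin n) : ℕ) < m ↔ v ∉ B) :
    (calHk n 4 \ H.image (fun e => e.image (Equiv.sumCongr (Equiv.refl _) σ))).card ≤
      ∑ x, ((Finset.univ.powersetCard 4).filter
        fun s => (∃ v ∈ s, v ∈ B) ∧ ¬ s ⊆ B ∧ s ∉ link H x).card := by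
  have hsub : calHk n 4 \ H.image (fun e => e.image (Equiv.sumCongr (Equiv.refl _) σ)) ⊆
      Finset.univ.biUnion fun x => ((Finset.univ.powersetCard 4).filter
        fun s => (∃ v ∈ s, v ∈ B) ∧ ¬ s ⊆ B ∧ s ∉ link H x).image
          fun s => pEdge x (s.image σ) := by
    intro e he
    simp only [calHk, Finset.mem_sdiff, Finset.mem_biUnion, Finset.mem_univ, true_and,
      Finset.mem_image, Finset.mem_filter, Finset.mem_powersetCard, Finset.subset_univ] at he ⊢
    obtain ⟨⟨x, t, ⟨ht, ⟨v, hv, hvm⟩, ⟨u, hu, hum⟩⟩, rfl⟩, hnot⟩ := he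
    have himg : (t.image σ.symm).image σ = t := by
      rw [Finset.image_image]; simp
    refine ⟨x, t.image σ.symm, ⟨?_, ⟨σ.symm u, Finset.mem_image_of_mem _ hu, ?_⟩, ?_, ?_⟩, ?_⟩
    · rw [Finset.card_image_of_injective _ σ.symm.injective, ht]
    · by_contra hB
      have := (hσ (σ.symm u)).2 hB
      rw [Equiv.apply_symm_apply] at this
      omega
    · intro hB
      refine (hσ (σ.symm v)).1 ?_ (hB (Finset.mem_image_of_mem _ hv))
      rw [Equiv.apply_symm_apply]
      omega
    · intro hmem
      refine hnot ⟨_, (mem_link.1 hmem).2, ?_⟩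
      rw [image_pEdge, himg, pEdge]
    · rw [himg, pEdge]
  refine (Finset.card_le_card hsub).trans (Finset.card_biUnion_le.trans ?_)
  exact Finset.sum_le_sum fun x _ => Finset.card_image_le

/-- In a hypergraph far from extremal, the optimal weighting has small total deficiency. -/
lemma total_deficiency_le {n : ℕ} (h4 : 4 ∣ n) {H : Finset (Finset (Fin (n / 4) ⊕ Fin n))}
    (hH : ∀ e ∈ H, ∃ (x : Fin (n / 4)) (s : Finset (Fin n)), s.card = 4 ∧ e = pEdge x s)
    {ρ ε γ τ κ K : ℝ}
    (hdeg : ∀ (x : Fin (n / 4)) (v : Fin n),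
        (Nat.choose (n - 1) 3 : ℝ) - (Nat.choose (3 * n / 4) 3 : ℝ) - ρ * (n : ℝ) ^ 3
          < (pdeg H (Sum.inl x) (Sum.inr v) : ℝ))
    (hfar : ¬ ∃ σ : Equiv.Perm (Fin (n / 4) ⊕ Fin n),
        (((calHk n 4) \ (H.image (fun e => e.image σ))).card : ℝ)
          < ε * ((n + n / 4 : ℕ) : ℝ) ^ 5)
    {w : Finset (Fin (n / 4) ⊕ Fin n) → ℝ} (hw : ∀ e, 0 ≤ w e)
    (hpos : ∀ e ∈ H, 0 < ∑ v ∈ e, (1 - load H w v) → w e = κ)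
    (hρ : 0 ≤ ρ) (hε : 0 ≤ ε) (hκ : 0 < κ) (hK : 0 < K) (hKn : K ≤ n / 4) (hγ : 0 < γ)
    (hγ1 : γ ≤ 1 / 8) (hτγ : 10 * τ ≤ γ ^ 2)
    (hlarge : 6 * ρ * (n : ℝ) ^ 3 + 120 / (κ * K) + 6 * (n : ℝ) ^ 2 ≤ τ * (n : ℝ) ^ 3)
    (hclose : (n : ℝ) ^ 4 + ρ * (n : ℝ) ^ 5 + 17 * γ * (n : ℝ) ^ 5 + 5 * n / κ < ε * (n : ℝ) ^ 5) :
    ∑ v, (1 - load H w v) ≤ 5 * K := by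
  by_contra! hsum
  obtain ⟨m, hnm⟩ := h4
  have hm : n / 4 = m := by omega
  have h3n : 3 * n / 4 = 3 * m := by omega
  have hnR : (n : ℝ) = 4 * m := by exact_mod_cast hnm
  have hKm : K ≤ m := by rw [hnR] at hKn; linarith
  have hm0 : (0 : ℝ) < m := lt_of_lt_of_le hK hKm
  have hX : Fintype.card (Fin (n / 4)) = m := by rw [Fintype.card_fin, hm]
  have hU : Fintype.card (Fin n) = 4 * m := by rw [Fintype.card_fin, hnm]
  have : Nonempty (Fin (n / 4)) := by
    rw [← Fintype.card_pos_iff, hX]; exact_mod_cast hm0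
  have hL : ∀ x, ∀ s ∈ link H x, s.card = 4 := fun x s hs => (mem_link.1 hs).1
  have hdeg' : ∀ x v, ((4 * m - 1).choose 3 : ℝ) - ((3 * m).choose 3 : ℝ) - ρ * (n : ℝ) ^ 3 ≤
      ((link H x).filter fun s => v ∈ s).card := by
    intro x v
    have := hdeg x v
    rw [pdeg, pdeg_eq_card_link hH, h3n] at this
    rw [← hnm]; exact this.le
  have hload0 : ∀ v, 0 ≤ load H w v := fun v => Finset.sum_nonneg fun e _ => hw e
  obtain ⟨B, Y, hB, hY, hBY⟩ := exists_sparse_part (γ := γ) (τ := τ) (ρ := ρ) (n := n) hX hU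
    (link H) hL (a := fun x => 1 - load H w (Sum.inl x)) (b := fun u => 1 - load H w (Sum.inr u))
    (fun v => by linarith [hload0 (Sum.inr v)]) hκ hK hKm
    (fun x => by
      have := card_positive_link_le hw hpos x
      simp only [sum_pEdge] at this
      linarith)
    (by rw [← Fintype.sum_sum_type fun v => 1 - load H w v]; exact hsum) hnR hdeg' hγ hγ1 hτγ
    hlarge
  have hγn : 0 ≤ γ * n := by positivity
  obtain ⟨B', hB', hBB'⟩ := exists_card_eq_sdiff_le (B := B) (k := 3 * m) (g := γ * n)
    (by rw [hU]; omega) hγn (by push_cast; rw [hnR] at hB ⊢; linarith)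
  obtain ⟨σ, hσ⟩ := exists_perm_initial (n := n) (m := m) (by omega) B'ᶜ (by
    rw [Finset.card_compl, hU, hB']; omega)
  refine hfar ⟨Equiv.sumCongr (Equiv.refl _) σ, ?_⟩
  have h1 : (((calHk n 4) \ (H.image (fun e => e.image
      (Equiv.sumCongr (Equiv.refl (Fin (n / 4))) σ)))).card : ℝ) ≤
      ∑ x, (((Finset.univ.powersetCard 4).filter
        fun s => (∃ v ∈ s, v ∈ B') ∧ ¬ s ⊆ B' ∧ s ∉ link H x).card : ℝ) := by
    exact_mod_cast card_calHk_sdiff_le hm (H := H) (B := B') (σ := σ)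
      fun v => by rw [hσ]; exact Finset.mem_compl
  have h2 : _ ≤ ∑ x, (3 * m * ((3 * m : ℝ) ^ 2 + ρ * (n : ℝ) ^ 3)
      + 4 * (((link H x).filter fun s => s ⊆ B').card : ℝ)) :=
    h1.trans (Finset.sum_le_sum fun x _ =>
      le_of_eq_of_le (by congr!) (card_missing_le hU (hL x) hB' (hdeg' x)))
  rw [Finset.sum_add_distrib, Finset.sum_const, Finset.card_univ, hX, nsmul_eq_mul,
    ← Finset.mul_sum] at h2
  have h3 := sum_inside_le hL (B := B) (B' := B') (Y := Y) (C := 5 / κ) (by positivity)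
    fun x hx => by rw [le_div_iff₀ hκ, mul_comm]; exact hBY x hx
  have hUR : (Fintype.card (Fin n) : ℝ) = n := by simp
  have hXR : (Fintype.card (Fin (n / 4)) : ℝ) = n / 4 := by rw [hX, hnR]; ring
  rw [hUR, hXR] at h3
  have hn0 : (0 : ℝ) < n := by rw [hnR]; positivity
  have h4 : (Y.card : ℝ) * (n : ℝ) ^ 4 ≤ 4 * γ * n * (n : ℝ) ^ 4 := by gcongr
  have h5 : ((B' \ B).card : ℝ) * (n : ℝ) ^ 3 ≤ γ * n * (n : ℝ) ^ 3 := by gcongr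
  have h6 : (n : ℝ) / 4 * (5 / κ + ((B' \ B).card : ℝ) * (n : ℝ) ^ 3) ≤
    (n : ℝ) / 4 * (5 / κ + γ * n * (n : ℝ) ^ 3) := by gcongr
  have h7 : (m : ℝ) * (3 * m * ((3 * m : ℝ) ^ 2 + ρ * (n : ℝ) ^ 3)) ≤
      (n : ℝ) ^ 4 + ρ * (n : ℝ) ^ 5 := by
    have hmn : (m : ℝ) = n / 4 := by rw [hnR]; ring
    rw [hmn]
    have : 0 ≤ ρ * (n : ℝ) ^ 5 := by positivity
    have : 0 ≤ (n : ℝ) ^ 4 := by positivity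
    nlinarith
  have h8 : ε * (n : ℝ) ^ 5 ≤ ε * ((n + n / 4 : ℕ) : ℝ) ^ 5 := by
    gcongr; omega
  have h9 : 5 * (n : ℝ) / κ = n * (5 / κ) := by ring
  refine lt_of_le_of_lt (h2.trans ?_) (hclose.trans_le h8)
  rw [h9]
  nlinarith

lemma sum_load {V : Type*} [Fintype V] [DecidableEq V] (H : Finset (Finset V))
    (w : Finset V → ℝ) : ∑ v, load H w v = ∑ e ∈ H, (e.card : ℝ) * w e := by
  simp only [load, Finset.sum_filter]
  rw [Finset.sum_comm]
  refine Finset.sum_congr rfl fun e _ => ?_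
  simp [Finset.sum_ite_mem]

/-- Deleting the weight at overloaded vertices makes all loads bounded and changes few of them. -/
lemma exists_bounded_weight {V : Type*} [Fintype V] [DecidableEq V] {H : Finset (Finset V)}
    (hH : ∀ e ∈ H, e.card ≤ 5) {w : Finset V → ℝ} (hw : ∀ e, 0 ≤ w e) {R δ : ℝ}
    (hR : ∑ v, (1 - load H w v) ^ 2 ≤ R) (hδ : 0 < δ) (hδ1 : δ ≤ 1) :
    ∃ w' : Finset V → ℝ, (∀ e, 0 ≤ w' e) ∧ (∀ e, w' e ≤ w e) ∧ (∀ v, load H w' v ≤ 3 / 2) ∧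
      ((Finset.univ.filter fun v => δ < |1 - load H w' v|).card : ℝ) ≤ 64 * R / δ ^ 2 := by
  have hR0 : 0 ≤ R := le_trans (Finset.sum_nonneg fun v _ => sq_nonneg _) hR
  set O := Finset.univ.filter fun v => 3 / 2 < load H w v with hO
  set w' : Finset V → ℝ := fun e => if ∃ v ∈ O, v ∈ e then 0 else w e with hw'
  have hw'0 : ∀ e, 0 ≤ w' e := fun e => by
    simp only [hw']; split_ifs
    · exact le_rfl
    · exact hw e
  have hw'w : ∀ e, w' e ≤ w e := fun e => by
    simp only [hw']; split_ifs
    · exact hw e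
    · exact le_rfl
  have hmono : ∀ v, load H w' v ≤ load H w v := fun v => Finset.sum_le_sum fun e _ => hw'w e
  have hloss : ∑ v, (load H w v - load H w' v) ≤ 30 * R := by
    have h1 : ∑ v, (load H w v - load H w' v) = ∑ e ∈ H, (e.card : ℝ) * (w e - w' e) := by
      rw [Finset.sum_sub_distrib, sum_load, sum_load, ← Finset.sum_sub_distrib]
      exact Finset.sum_congr rfl fun e _ => by ring
    have h2 : ∑ e ∈ H, (e.card : ℝ) * (w e - w' e) ≤
        ∑ e ∈ H, 5 * ∑ v ∈ O, if v ∈ e then w e else 0 := by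
      refine Finset.sum_le_sum fun e he => mul_le_mul (by exact_mod_cast hH e he) ?_
        (sub_nonneg.2 (hw'w e)) (by norm_num)
      have hnn : ∀ v ∈ O, (0 : ℝ) ≤ if v ∈ e then w e else 0 := fun v _ => by
        split_ifs
        · exact hw e
        · exact le_rfl
      by_cases h : ∃ v ∈ O, v ∈ e
      · obtain ⟨v, hv, hve⟩ := h
        have := Finset.single_le_sum hnn hv
        rw [if_pos hve] at this
        linarith [hw'0 e]
      · have : w' e = w e := if_neg h
        rw [this, sub_self]
        exact Finset.sum_nonneg hnn
    have h3 : ∑ e ∈ H, 5 * ∑ v ∈ O, (if v ∈ e then w e else 0) = 5 * ∑ v ∈ O, load H w v := by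
      rw [← Finset.mul_sum, Finset.sum_comm]
      simp only [load, Finset.sum_filter]
    have h4 : ∑ v ∈ O, load H w v ≤ ∑ v ∈ O, 6 * (1 - load H w v) ^ 2 := by
      refine Finset.sum_le_sum fun v hv => ?_
      have : 3 / 2 < load H w v := (Finset.mem_filter.1 hv).2
      nlinarith
    have h5 : ∑ v ∈ O, 6 * (1 - load H w v) ^ 2 ≤ ∑ v, 6 * (1 - load H w v) ^ 2 :=
      Finset.sum_le_sum_of_subset_of_nonneg (Finset.subset_univ _) fun v _ _ => by positivity
    rw [← Finset.mul_sum (s := Finset.univ)] at h5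
    linarith
  refine ⟨w', hw'0, hw'w, fun v => ?_, ?_⟩
  · by_cases hv : v ∈ O
    · have : load H w' v = 0 := by
        refine Finset.sum_eq_zero fun e he => if_pos ⟨v, hv, (Finset.mem_filter.1 he).2⟩
      rw [this]; norm_num
    · exact (hmono v).trans (by simpa [hO] using hv)
  · have hpt : ∀ v, (if δ < |1 - load H w' v| then (1 : ℝ) else 0) ≤
        4 / δ ^ 2 * (1 - load H w v) ^ 2 + 2 / δ * (load H w v - load H w' v) := by
      intro v
      have hl := sub_nonneg.2 (hmono v)
      split_ifs with h
      · have htri : |1 - load H w' v| ≤ |1 - load H w v| + (load H w v - load H w' v) := by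
          have := abs_add_le (1 - load H w v) (load H w v - load H w' v)
          rwa [abs_of_nonneg hl, sub_add_sub_cancel] at this
        rcases le_or_gt (δ / 2) (load H w v - load H w' v) with h1 | h1
        · have : 1 ≤ 2 / δ * (load H w v - load H w' v) := by
            rw [div_mul_eq_mul_div, le_div_iff₀ hδ]; linarith
          have : 0 ≤ 4 / δ ^ 2 * (1 - load H w v) ^ 2 := by positivity
          linarith
        · have h2 : δ / 2 ≤ |1 - load H w v| := by linarith
          have h3 : (δ / 2) ^ 2 ≤ (1 - load H w v) ^ 2 := by
            rw [← sq_abs (1 - load H w v)]; gcongr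
          have : 1 ≤ 4 / δ ^ 2 * (1 - load H w v) ^ 2 := by
            rw [div_mul_eq_mul_div, le_div_iff₀ (by positivity)]; linarith
          have : 0 ≤ 2 / δ * (load H w v - load H w' v) := by positivity
          linarith
      · positivity
    rw [Finset.natCast_card_filter]
    refine (Finset.sum_le_sum fun v _ => hpt v).trans ?_
    rw [Finset.sum_add_distrib, ← Finset.mul_sum, ← Finset.mul_sum]
    have h1 : 4 / δ ^ 2 * ∑ v, (1 - load H w v) ^ 2 ≤ 4 / δ ^ 2 * R := by gcongr
    have h2 : 2 / δ * ∑ v, (load H w v - load H w' v) ≤ 2 / δ * (30 * R) := by gcongr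
    have h3 : 2 / δ ≤ 2 / δ ^ 2 := by
      gcongr; nlinarith
    have h4 : 2 / δ * (30 * R) ≤ 2 / δ ^ 2 * (30 * R) := by gcongr
    calc _ ≤ 4 / δ ^ 2 * R + 2 / δ ^ 2 * (30 * R) := by linarith
      _ = 64 * R / δ ^ 2 := by ring

lemma sum_powerset_prod_weights {α : Type*} [DecidableEq α] (H : Finset α) (p g : α → ℝ) :
    ∑ S ∈ H.powerset, ((∏ e ∈ S, p e) * ∏ e ∈ H \ S, (1 - p e)) * ∏ e ∈ S, g e =
      ∏ e ∈ H, (1 + p e * (g e - 1)) := by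
  have h : ∀ e ∈ H, 1 + p e * (g e - 1) = p e * g e + (1 - p e) := fun e _ => by ring
  rw [Finset.prod_congr rfl h, Finset.prod_add]
  refine Finset.sum_congr rfl fun S _ => ?_
  rw [Finset.prod_mul_distrib]; ring

/-- Exponential moment bound for a random subset, stated with a union bound. -/
lemma exists_subset_of_exp_sum_lt_one {α ι : Type*} [DecidableEq α] [Fintype ι] (H : Finset α)
    (F : ι → Finset α) (hF : ∀ i, F i ⊆ H) {p : α → ℝ} (hp0 : ∀ e, 0 ≤ p e) (hp1 : ∀ e, p e ≤ 1)
    (t b : ι → ℝ)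
    (h : ∑ i, Real.exp ((Real.exp (t i) - 1) * ∑ e ∈ F i, p e - b i) < 1) :
    ∃ S ⊆ H, ∀ i, t i * ((S ∩ F i).card : ℝ) < b i := by
  set P : Finset α → ℝ := fun S => (∏ e ∈ S, p e) * ∏ e ∈ H \ S, (1 - p e) with hP
  have hP0 : ∀ S, 0 ≤ P S := fun S => mul_nonneg (Finset.prod_nonneg fun e _ => hp0 e)
    (Finset.prod_nonneg fun e _ => sub_nonneg.2 (hp1 e))
  have hPsum : ∑ S ∈ H.powerset, P S = 1 := by
    simpa using sum_powerset_prod_weights H p fun _ => 1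
  have hmgf : ∀ i, ∑ S ∈ H.powerset, P S * Real.exp (t i * ((S ∩ F i).card : ℝ)) ≤
      Real.exp ((Real.exp (t i) - 1) * ∑ e ∈ F i, p e) := by
    intro i
    have h1 := sum_powerset_prod_weights H p fun e => if e ∈ F i then Real.exp (t i) else 1
    have h2 : ∀ S : Finset α, ∏ e ∈ S, (if e ∈ F i then Real.exp (t i) else 1) =
        Real.exp (t i * ((S ∩ F i).card : ℝ)) := by
      intro S
      rw [Finset.prod_ite_mem, Finset.prod_const, ← Real.exp_nat_mul, mul_comm]
    simp only [h2] at h1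
    rw [h1]
    have h3 : ∀ e ∈ H, 1 + p e * ((if e ∈ F i then Real.exp (t i) else 1) - 1) ≤
        Real.exp (if e ∈ F i then (Real.exp (t i) - 1) * p e else 0) := by
      intro e _
      split_ifs
      · have := Real.add_one_le_exp ((Real.exp (t i) - 1) * p e)
        linarith
      · simp
    refine (Finset.prod_le_prod (fun e _ => ?_) h3).trans (le_of_eq ?_)
    · have : 0 ≤ (if e ∈ F i then Real.exp (t i) else 1) := by
        split_ifs <;> positivity
      nlinarith [hp0 e, hp1 e]
    · rw [← Real.exp_sum, Finset.sum_ite_mem, Finset.inter_eq_right.2 (hF i), Finset.mul_sum]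
  by_contra! hno
  have h1 : ∀ S ∈ H.powerset, P S ≤
      ∑ i, P S * Real.exp (t i * ((S ∩ F i).card : ℝ)) * Real.exp (-b i) := by
    intro S hS
    obtain ⟨i, hi⟩ := hno S (Finset.mem_powerset.1 hS)
    have h2 : P S * 1 ≤ P S * (Real.exp (t i * ((S ∩ F i).card : ℝ)) * Real.exp (-b i)) := by
      gcongr
      · exact hP0 S
      · rw [← Real.exp_add]; exact Real.one_le_exp (by linarith)
    have h3 := Finset.single_le_sum
      (f := fun i => P S * Real.exp (t i * ((S ∩ F i).card : ℝ)) * Real.exp (-b i))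
      (fun i _ => mul_nonneg (mul_nonneg (hP0 S) (Real.exp_pos _).le) (Real.exp_pos _).le)
      (Finset.mem_univ i)
    linarith
  have h2 := Finset.sum_le_sum h1
  rw [hPsum, Finset.sum_comm] at h2
  have h3 : ∑ i, ∑ S ∈ H.powerset, P S * Real.exp (t i * ((S ∩ F i).card : ℝ)) * Real.exp (-b i) ≤
      ∑ i, Real.exp ((Real.exp (t i) - 1) * ∑ e ∈ F i, p e - b i) := by
    refine Finset.sum_le_sum fun i _ => ?_
    rw [← Finset.sum_mul, sub_eq_add_neg _ (b i), Real.exp_add]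
    gcongr
    exact hmgf i
  linarith

lemma exp_sub_one_mul_sub_le {t μ A M : ℝ} (ht : |t| ≤ 1) (hμ0 : 0 ≤ μ) (hμ : μ ≤ M) :
    (Real.exp t - 1) * μ - (t * μ + A) ≤ t ^ 2 * M - A := by
  have h1 := (abs_le.1 (Real.abs_exp_sub_one_sub_id_le ht)).2
  have h2 : (Real.exp t - 1 - t) * μ ≤ t ^ 2 * μ := by gcongr
  have h3 : t ^ 2 * μ ≤ t ^ 2 * M := by gcongr
  linarith

/-- Random rounding of a fractional weighting to a subhypergraph with prescribed degrees and
small codegrees. -/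
lemma exists_rounding {V : Type*} [Fintype V] [DecidableEq V] (H : Finset (Finset V))
    {w : Finset V → ℝ} {κ D t A Q : ℝ} {C : ℕ} (hw0 : ∀ e, 0 ≤ w e) (hwκ : ∀ e, w e ≤ κ)
    (hload : ∀ v, load H w v ≤ 3 / 2) (hD : 0 ≤ D) (hκD : κ * D ≤ 1)
    (hC : ∀ x y, x ≠ y → pdeg H x y ≤ C) (hCκ : C * (κ * D) ≤ 1) (ht : 0 < t) (ht1 : t ≤ 1)
    (hunion : 2 * (Fintype.card V : ℝ) * Real.exp (t ^ 2 * (3 / 2 * D) - t * A)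
      + (Fintype.card V : ℝ) ^ 2 * Real.exp (2 - Q) < 1) :
    ∃ S ⊆ H, (∀ v, |(vdeg S v : ℝ) - D * load H w v| < A) ∧
      ∀ x y, x ≠ y → (pdeg S x y : ℝ) < Q := by
  set p : Finset V → ℝ := fun e => w e * D with hp
  have hp0 : ∀ e, 0 ≤ p e := fun e => mul_nonneg (hw0 e) hD
  have hpκ : ∀ e, p e ≤ κ * D := fun e => mul_le_mul_of_nonneg_right (hwκ e) hD
  set F₁ : V → Finset (Finset V) := fun v => H.filter fun e => v ∈ e with hF₁
  set F₂ : V × V → Finset (Finset V) := fun q => H.filter fun e =>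
    q.1 ≠ q.2 ∧ q.1 ∈ e ∧ q.2 ∈ e with hF₂
  have hsum₁ : ∀ v, ∑ e ∈ F₁ v, p e = D * load H w v := fun v => by
    simp only [hp, hF₁, load, Finset.mul_sum]
    exact Finset.sum_congr rfl fun e _ => mul_comm _ _
  have hμ0 : ∀ v, 0 ≤ D * load H w v := fun v =>
    mul_nonneg hD (Finset.sum_nonneg fun e _ => hw0 e)
  have hμ : ∀ v, D * load H w v ≤ 3 / 2 * D := fun v => by
    rw [mul_comm]; exact mul_le_mul_of_nonneg_right (hload v) hD
  have hsum₂ : ∀ q, ∑ e ∈ F₂ q, p e ≤ 1 := by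
    rintro ⟨x, y⟩
    by_cases hxy : x = y
    · simp [hF₂, hxy]
    · have hcard : (F₂ (x, y)).card ≤ C := by
        simpa [hF₂, hxy, pdeg] using hC x y hxy
      have hκD0 : 0 ≤ κ * D := (hp0 ∅).trans (hpκ ∅)
      calc ∑ e ∈ F₂ (x, y), p e ≤ (F₂ (x, y)).card • (κ * D) :=
            Finset.sum_le_card_nsmul _ _ _ fun e _ => hpκ e
        _ ≤ C * (κ * D) := by rw [nsmul_eq_mul]; gcongr
        _ ≤ 1 := hCκ
  have key := exists_subset_of_exp_sum_lt_one (ι := V ⊕ V ⊕ (V × V)) H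
    (Sum.elim F₁ (Sum.elim F₁ F₂))
    (by rintro (v | v | q) <;> exact Finset.filter_subset _ _)
    hp0 (fun e => (hpκ e).trans hκD)
    (Sum.elim (fun _ => t) (Sum.elim (fun _ => -t) fun _ => 1))
    (Sum.elim (fun v => t * (D * load H w v) + t * A)
      (Sum.elim (fun v => -t * (D * load H w v) + t * A) fun _ => Q))
    (by
      simp only [Fintype.sum_sum_type, Sum.elim_inl, Sum.elim_inr, hsum₁]
      refine lt_of_le_of_lt ?_ hunion
      have h1 : ∑ v, Real.exp ((Real.exp t - 1) * (D * load H w v)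
          - (t * (D * load H w v) + t * A)) ≤
          Fintype.card V * Real.exp (t ^ 2 * (3 / 2 * D) - t * A) := by
        rw [← nsmul_eq_mul]
        refine Finset.sum_le_card_nsmul _ _ _ fun v _ => Real.exp_le_exp.2 ?_
        exact exp_sub_one_mul_sub_le (by rw [abs_of_pos ht]; exact ht1) (hμ0 v) (hμ v)
      have h2 : ∑ v, Real.exp ((Real.exp (-t) - 1) * (D * load H w v)
          - (-t * (D * load H w v) + t * A)) ≤
          Fintype.card V * Real.exp (t ^ 2 * (3 / 2 * D) - t * A) := by
        rw [← nsmul_eq_mul]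
        refine Finset.sum_le_card_nsmul _ _ _ fun v _ => Real.exp_le_exp.2 ?_
        rw [← neg_sq t]
        exact exp_sub_one_mul_sub_le (by rw [abs_neg, abs_of_pos ht]; exact ht1) (hμ0 v) (hμ v)
      have h3 : ∑ q, Real.exp ((Real.exp 1 - 1) * ∑ e ∈ F₂ q, p e - Q) ≤
          (Fintype.card V : ℝ) ^ 2 * Real.exp (2 - Q) := by
        have hc : (Fintype.card V : ℝ) ^ 2 = (Finset.univ : Finset (V × V)).card := by
          rw [Finset.card_univ, Fintype.card_prod]; push_cast; ring
        rw [hc, ← nsmul_eq_mul]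
        refine Finset.sum_le_card_nsmul _ _ _ fun q _ => Real.exp_le_exp.2 ?_
        have he := Real.exp_one_lt_d9
        have he1 : 0 ≤ Real.exp 1 - 1 := by linarith [Real.add_one_le_exp (1 : ℝ)]
        have := mul_le_mul_of_nonneg_left (hsum₂ q) he1
        linarith
      linarith)
  obtain ⟨S, hSH, hS⟩ := key
  have hdeg : ∀ v, ((S ∩ F₁ v).card : ℝ) = vdeg S v := fun v => by
    change ((S ∩ H.filter fun e => v ∈ e).card : ℝ) = _
    rw [Finset.inter_filter, Finset.inter_eq_left.2 hSH, vdeg]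
  refine ⟨S, hSH, fun v => ?_, fun x y hxy => ?_⟩
  · have h1 := hS (Sum.inl v)
    have h2 := hS (Sum.inr (Sum.inl v))
    simp only [Sum.elim_inl, Sum.elim_inr, hdeg] at h1 h2
    rw [abs_lt]
    constructor <;> nlinarith
  · have h1 := hS (Sum.inr (Sum.inr (x, y)))
    simp only [Sum.elim_inr, one_mul] at h1
    have h2 : S ∩ F₂ (x, y) = S.filter fun e => x ∈ e ∧ y ∈ e := by
      change S ∩ H.filter (fun e => x ≠ y ∧ x ∈ e ∧ y ∈ e) = _
      rw [Finset.inter_filter, Finset.inter_eq_left.2 hSH]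
      simp only [ne_eq, hxy, not_false_eq_true, true_and]
    rwa [h2] at h1

lemma pdeg_le_card_pow {V : Type*} [Fintype V] [DecidableEq V] {H : Finset (Finset V)}
    (hH : ∀ e ∈ H, e.card = 5) {x y : V} (hxy : x ≠ y) :
    pdeg H x y ≤ Fintype.card V ^ 3 := by
  have h : pdeg H x y ≤ (Finset.powersetCard 3 (Finset.univ : Finset V)).card := by
    refine Finset.card_le_card_of_injOn (fun e => (e.erase x).erase y) ?_ ?_
    · intro e he
      simp only [Finset.coe_filter, Set.mem_ofPred_eq] at he
      have hy : y ∈ e.erase x := Finset.mem_erase.2 ⟨hxy.symm, he.2.2⟩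
      simp [Finset.card_erase_of_mem hy, Finset.card_erase_of_mem he.2.1, hH e he.1]
    · intro e he f hf hef
      simp only [Finset.coe_filter, Set.mem_ofPred_eq] at he hf
      have hy : y ∈ e.erase x := Finset.mem_erase.2 ⟨hxy.symm, he.2.2⟩
      have hy' : y ∈ f.erase x := Finset.mem_erase.2 ⟨hxy.symm, hf.2.2⟩
      have h2 := congrArg (insert x) (congrArg (insert y) hef)
      simpa only [Finset.insert_erase hy, Finset.insert_erase hy', Finset.insert_erase he.2.1,
        Finset.insert_erase hf.2.1] using h2
  rw [Finset.card_powersetCard, Finset.card_univ] at h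
  exact h.trans (Nat.choose_le_pow _ _)

open Filter in
lemma eventually_mul_rpow_le_rpow (c : ℝ) {a b : ℝ} (hab : a < b) :
    ∀ᶠ n : ℕ in atTop, c * (n : ℝ) ^ a ≤ (n : ℝ) ^ b := by
  have h := ((tendsto_rpow_atTop (sub_pos.2 hab)).comp
    (tendsto_natCast_atTop_atTop (R := ℝ))).eventually_ge_atTop c
  filter_upwards [h, eventually_gt_atTop 0] with n hn hn0
  have hn0' : (0 : ℝ) < n := by exact_mod_cast hn0
  calc c * (n : ℝ) ^ a ≤ (n : ℝ) ^ (b - a) * (n : ℝ) ^ a := by gcongr; exact hn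
    _ = (n : ℝ) ^ b := by rw [← Real.rpow_add hn0', sub_add_cancel]

open Filter in
lemma eventually_union_bound_lt_one :
    ∀ᶠ n : ℕ in atTop, 2 * (2 * (n : ℝ)) *
        Real.exp (((n : ℝ) ^ (-(0.05 : ℝ))) ^ 2 * (3 / 2 * (n : ℝ) ^ (0.2 : ℝ))
          - (n : ℝ) ^ (-(0.05 : ℝ)) * (1 / 2 * (n : ℝ) ^ (0.19 : ℝ)))
      + (2 * (n : ℝ)) ^ 2 * Real.exp (2 - (n : ℝ) ^ (0.19 : ℝ)) < 1 := by
  have hlog : ∀ᶠ n : ℕ in atTop, Real.log n ≤ (n : ℝ) ^ (0.1 : ℝ) := by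
    have h := tendsto_natCast_atTop_atTop (R := ℝ) |>.eventually
      ((isLittleO_log_rpow_atTop (r := (0.1 : ℝ)) (by norm_num)).bound one_pos)
    filter_upwards [h] with n hn
    rw [one_mul, Real.norm_of_nonneg (by positivity : (0 : ℝ) ≤ (n : ℝ) ^ (0.1 : ℝ))] at hn
    exact (le_abs_self _).trans hn
  filter_upwards [hlog, eventually_mul_rpow_le_rpow 20 (by norm_num : (0.1 : ℝ) < 0.14),
    eventually_mul_rpow_le_rpow 20 (by norm_num : (0.1 : ℝ) < 0.19), eventually_ge_atTop 1]
    with n hl h1 h2 hn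
  have hn1 : (1 : ℝ) ≤ n := by exact_mod_cast hn
  have hn0 : (0 : ℝ) < n := by linarith
  have e1 : ((n : ℝ) ^ (-(0.05 : ℝ))) ^ 2 * (3 / 2 * (n : ℝ) ^ (0.2 : ℝ)) =
      3 / 2 * (n : ℝ) ^ (0.1 : ℝ) := by
    rw [pow_two, mul_left_comm, ← Real.rpow_add hn0, ← Real.rpow_add hn0]; norm_num
  have e2 : (n : ℝ) ^ (-(0.05 : ℝ)) * (1 / 2 * (n : ℝ) ^ (0.19 : ℝ)) =
      1 / 2 * (n : ℝ) ^ (0.14 : ℝ) := by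
    rw [mul_left_comm, ← Real.rpow_add hn0]; norm_num
  rw [e1, e2]
  have hone : 1 ≤ (n : ℝ) ^ (0.1 : ℝ) := Real.one_le_rpow hn1 (by norm_num)
  have hnexp : (n : ℝ) ≤ Real.exp ((n : ℝ) ^ (0.1 : ℝ)) := by
    rw [← Real.log_le_iff_le_exp hn0]; exact hl
  have hexp2 : (4 : ℝ) ≤ Real.exp 2 := by
    rw [show (2 : ℝ) = 1 + 1 by norm_num, Real.exp_add]
    nlinarith [Real.exp_one_gt_d9]
  have hexpneg : Real.exp (-2) ≤ 1 / 4 := by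
    rw [Real.exp_neg, inv_le_comm₀ (Real.exp_pos _) (by norm_num)]; linarith
  set y := (n : ℝ) ^ (0.1 : ℝ)
  have b1 : 2 * (2 * (n : ℝ)) * Real.exp (3 / 2 * y - 1 / 2 * (n : ℝ) ^ (0.14 : ℝ)) ≤ 1 / 4 := by
    calc 2 * (2 * (n : ℝ)) * Real.exp (3 / 2 * y - 1 / 2 * (n : ℝ) ^ (0.14 : ℝ))
        = 4 * n * Real.exp (3 / 2 * y - 1 / 2 * (n : ℝ) ^ (0.14 : ℝ)) := by ring
      _ ≤ Real.exp 2 * Real.exp y * Real.exp (3 / 2 * y - 1 / 2 * (n : ℝ) ^ (0.14 : ℝ)) := by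
        gcongr
      _ = Real.exp (2 + y + (3 / 2 * y - 1 / 2 * (n : ℝ) ^ (0.14 : ℝ))) := by
        rw [Real.exp_add, Real.exp_add]
      _ ≤ Real.exp (-2) := Real.exp_le_exp.2 (by linarith)
      _ ≤ 1 / 4 := hexpneg
  have b2 : (2 * (n : ℝ)) ^ 2 * Real.exp (2 - (n : ℝ) ^ (0.19 : ℝ)) ≤ 1 / 4 := by
    calc (2 * (n : ℝ)) ^ 2 * Real.exp (2 - (n : ℝ) ^ (0.19 : ℝ))
        = 4 * n * n * Real.exp (2 - (n : ℝ) ^ (0.19 : ℝ)) := by ring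
      _ ≤ Real.exp 2 * Real.exp y * Real.exp y * Real.exp (2 - (n : ℝ) ^ (0.19 : ℝ)) := by
        gcongr
      _ = Real.exp (2 + y + y + (2 - (n : ℝ) ^ (0.19 : ℝ))) := by
        rw [Real.exp_add, Real.exp_add, Real.exp_add]
      _ ≤ Real.exp (-2) := Real.exp_le_exp.2 (by linarith)
      _ ≤ 1 / 4 := hexpneg
  linarith

lemma card_pEdge {X U : Type*} [DecidableEq X] [DecidableEq U] (x : X) (s : Finset U) :
    (pEdge x s).card = s.card + 1 := by
  rw [pEdge, Finset.card_insert_of_notMem (by simp),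
    Finset.card_image_of_injective _ Sum.inr_injective]

/-- Let `0 < ρ ≪ ε ≪ 1` and let `n ≡ 0 (mod 4)` be sufficiently
large. Let `H` be a balanced `(1,4)`-partite 5-graph with classes `X = Fin (n/4)`,
`[n]` such that `d_H({x,v}) > C(n-1,3) - C(3n/4,3) - ρn³` for all `x ∈ X`,
`v ∈ [n]`. If `H` is not `ε`-close to `𝓗₄(n, n/4)`, then `H` has a spanning
subgraph `H'` such that: (1) all vertices `x`, with at most `n^{0.99}` exceptions,
satisfy `d_{H'}(x) = (1 ± n^{-0.01})·n^{0.2}`; (2) `d_{H'}(x) < 2n^{0.2}` for all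
`x`; (3) `d_{H'}({x,y}) < n^{0.19}` for all pairs of distinct vertices `x, y`. -/
theorem almost_regular_spanning_subgraph :
    ∃ ε₀ : ℝ, 0 < ε₀ ∧ ∀ ε : ℝ, 0 < ε → ε < ε₀ →
    ∃ ρ₀ : ℝ, 0 < ρ₀ ∧ ∀ ρ : ℝ, 0 < ρ → ρ < ρ₀ →
    ∃ N : ℕ, ∀ n : ℕ, N ≤ n → 4 ∣ n →
    ∀ H : Finset (Finset (Fin (n / 4) ⊕ Fin n)),
      (∀ e ∈ H, ∃ (x : Fin (n / 4)) (s : Finset (Fin n)),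
        s.card = 4 ∧ e = insert (Sum.inl x) (s.image Sum.inr)) →
      (∀ (x : Fin (n / 4)) (v : Fin n),
        (Nat.choose (n - 1) 3 : ℝ) - (Nat.choose (3 * n / 4) 3 : ℝ) - ρ * (n : ℝ) ^ 3
          < (pdeg H (Sum.inl x) (Sum.inr v) : ℝ)) →
      (¬ ∃ σ : Equiv.Perm (Fin (n / 4) ⊕ Fin n),
        (((calHk n 4) \ (H.image (fun e => e.image σ))).card : ℝ)
          < ε * ((n + n / 4 : ℕ) : ℝ) ^ 5) →
      ∃ H' ⊆ H,
        (({x : Fin (n / 4) ⊕ Fin n |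
            ¬ ((1 - (n : ℝ) ^ (-(0.01 : ℝ))) * (n : ℝ) ^ ((0.2 : ℝ)) ≤ (vdeg H' x : ℝ) ∧
              (vdeg H' x : ℝ) ≤ (1 + (n : ℝ) ^ (-(0.01 : ℝ))) * (n : ℝ) ^ ((0.2 : ℝ)))}.ncard : ℝ)
          ≤ (n : ℝ) ^ ((0.99 : ℝ))) ∧
        (∀ x : Fin (n / 4) ⊕ Fin n, (vdeg H' x : ℝ) < 2 * (n : ℝ) ^ ((0.2 : ℝ))) ∧
        (∀ x y : Fin (n / 4) ⊕ Fin n, x ≠ y →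
          (pdeg H' x y : ℝ) < (n : ℝ) ^ ((0.19 : ℝ))) := by
  refine ⟨1, one_pos, fun ε hε hε1 => ?_⟩
  set γ : ℝ := ε / 100 with hγ
  have hγ0 : 0 < γ := by positivity
  set τ : ℝ := γ ^ 2 / 10 with hτ
  have hτ0 : 0 < τ := by positivity
  refine ⟨min (τ / 12) (ε / 100), by positivity, fun ρ hρ hρ' => ?_⟩
  have hρτ : ρ < τ / 12 := hρ'.trans_le (min_le_left _ _)
  have hρε : ρ < ε / 100 := hρ'.trans_le (min_le_right _ _)
  have hev := (((eventually_mul_rpow_le_rpow (480 / τ) (by norm_num : (2.9 : ℝ) < 3)).and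
    (eventually_mul_rpow_le_rpow (24 / τ) (by norm_num : (2 : ℝ) < 3))).and
    ((eventually_mul_rpow_le_rpow (10 / ε) (by norm_num : (4 : ℝ) < 5)).and
    (eventually_mul_rpow_le_rpow (50 / ε) (by norm_num : (4.5 : ℝ) < 5)))).and
    (((eventually_mul_rpow_le_rpow 4 (by norm_num : (0.6 : ℝ) < 1)).and
    (eventually_mul_rpow_le_rpow 320 (by norm_num : (0.64 : ℝ) < 0.99))).and
    (((eventually_mul_rpow_le_rpow 2 (by norm_num : (-(0.02) : ℝ) < -(0.01))).and
    (eventually_mul_rpow_le_rpow 8 (by norm_num : (-(0.3) : ℝ) < 0))).and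
    (eventually_union_bound_lt_one.and (Filter.eventually_ge_atTop 1))))
  obtain ⟨N, hN⟩ := Filter.eventually_atTop.1 hev
  refine ⟨N, fun n hn h4 H hH hdeg hfar => ?_⟩
  obtain ⟨⟨⟨f1, f2⟩, f3, f4⟩, ⟨f5, f6⟩, ⟨f7, f8⟩, funion, hn1⟩ := hN n hn
  have hn1R : (1 : ℝ) ≤ n := by exact_mod_cast hn1
  have hn0 : (0 : ℝ) < n := by linarith
  simp only [Real.rpow_ofNat, Real.rpow_one, Real.rpow_zero] at f1 f2 f3 f4 f5 f8
  rw [div_mul_eq_mul_div, div_le_iff₀ (by positivity)] at f1 f2 f3 f4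
  set κ : ℝ := (n : ℝ) ^ (-(3.5) : ℝ) with hκ
  set K : ℝ := (n : ℝ) ^ (0.6 : ℝ) with hK
  set δ : ℝ := (n : ℝ) ^ (-(0.02) : ℝ) with hδ
  set D : ℝ := (n : ℝ) ^ (0.2 : ℝ) with hD
  have hκ0 : 0 < κ := by positivity
  have hK0 : 0 < K := by positivity
  have hδ0 : 0 < δ := by positivity
  have hD0 : 0 < D := by positivity
  have hκK : 120 / (κ * K) = 120 * (n : ℝ) ^ (2.9 : ℝ) := by
    rw [hκ, hK, ← Real.rpow_add hn0, div_eq_mul_inv, ← Real.rpow_neg hn0.le]; norm_num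
  have hnκ : 5 * n / κ = 5 * (n : ℝ) ^ (4.5 : ℝ) := by
    rw [hκ, div_eq_mul_inv, ← Real.rpow_neg hn0.le, mul_assoc, ← Real.rpow_one_add' hn0.le]
      <;> norm_num
  have hδD : (n : ℝ) ^ (-(0.01) : ℝ) * D = (n : ℝ) ^ (0.19 : ℝ) := by
    rw [hD, ← Real.rpow_add hn0]; norm_num
  have hRδ : 64 * (5 * K) / δ ^ 2 = 320 * (n : ℝ) ^ (0.64 : ℝ) := by
    have h : (n : ℝ) ^ (0.64 : ℝ) * (δ * δ) = K := by
      rw [hδ, hK, ← Real.rpow_add hn0, ← Real.rpow_add hn0]; norm_num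
    rw [div_eq_iff (by positivity), ← h]; ring
  have hcube : (n : ℝ) ^ 3 * (κ * D) = (n : ℝ) ^ (-(0.3) : ℝ) := by
    rw [hκ, hD, ← Real.rpow_add hn0, ← Real.rpow_natCast, ← Real.rpow_add hn0]; norm_num
  have hδ1 : δ ≤ 1 := Real.rpow_le_one_of_one_le_of_nonpos hn1R (by norm_num)
  have hcardV : (Fintype.card (Fin (n / 4) ⊕ Fin n) : ℝ) ≤ 2 * n := by
    rw [Fintype.card_sum, Fintype.card_fin, Fintype.card_fin]
    have : n / 4 + n ≤ 2 * n := by omega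
    exact_mod_cast this
  have hH5 : ∀ e ∈ H, e.card = 5 := by
    intro e he
    obtain ⟨x, s, hs, rfl⟩ := hH e he
    exact (card_pEdge x s).trans (by rw [hs])
  obtain ⟨w, hw0, hwκ, hwpos, hwsq⟩ := exists_optimal_weight H hκ0.le
  have htotal : ∑ v, (1 - load H w v) ≤ 5 * K :=
    total_deficiency_le (τ := τ) h4 hH hdeg hfar hw0 hwpos hρ.le hε.le hκ0 hK0 (by linarith) hγ0
      (by linarith) (by rw [hτ]; linarith)
      (by
        rw [hκK]
        have : ρ * (n : ℝ) ^ 3 ≤ τ / 12 * (n : ℝ) ^ 3 := by gcongr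
        linarith)
      (by
        rw [hnκ]
        have h1 : ρ * (n : ℝ) ^ 5 ≤ ε / 100 * (n : ℝ) ^ 5 := by gcongr
        have h2 : 0 < ε * (n : ℝ) ^ 5 := by positivity
        rw [hγ]
        linarith)
  obtain ⟨w', hw'0, hw'w, hload, hexc⟩ :=
    exists_bounded_weight (fun e he => (hH5 e he).le) hw0 (hwsq.trans htotal) hδ0 hδ1
  have hCκ : ((Fintype.card (Fin (n / 4) ⊕ Fin n) ^ 3 : ℕ) : ℝ) * (κ * D) ≤ 1 := by
    push_cast
    calc (Fintype.card (Fin (n / 4) ⊕ Fin n) : ℝ) ^ 3 * (κ * D)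
        ≤ (2 * n) ^ 3 * (κ * D) := by gcongr
      _ = 8 * ((n : ℝ) ^ 3 * (κ * D)) := by ring
      _ ≤ 1 := by rw [hcube]; exact f8
  obtain ⟨S, hSH, hS₁, hS₂⟩ := exists_rounding H (κ := κ) (D := D)
    (t := (n : ℝ) ^ (-(0.05 : ℝ))) (A := 1 / 2 * (n : ℝ) ^ (0.19 : ℝ)) (Q := (n : ℝ) ^ (0.19 : ℝ))
    hw'0 (fun e => (hw'w e).trans (hwκ e)) hload hD0.le
    (by
      rw [hκ, hD, ← Real.rpow_add hn0]
      exact Real.rpow_le_one_of_one_le_of_nonpos hn1R (by norm_num))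
    (fun x y hxy => pdeg_le_card_pow hH5 hxy) hCκ (by positivity)
    (Real.rpow_le_one_of_one_le_of_nonpos hn1R (by norm_num))
    (lt_of_le_of_lt (by gcongr) funion)
  have hη1 : (n : ℝ) ^ (-(0.01) : ℝ) ≤ 1 :=
    Real.rpow_le_one_of_one_le_of_nonpos hn1R (by norm_num)
  refine ⟨S, hSH, ?_, fun v => ?_, hS₂⟩
  · refine le_trans ?_ (hexc.trans (hRδ.trans_le f6))
    rw [← Set.ncard_coe_finset, Nat.cast_le]
    refine Set.ncard_le_ncard (fun v hv => ?_) (Set.toFinite _)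
    rw [Finset.mem_coe, Finset.mem_filter]
    refine ⟨Finset.mem_univ _, ?_⟩
    by_contra! hle
    refine hv ?_
    have h1 := abs_lt.1 (hS₁ v)
    have h2 := abs_le.1 hle
    have h3 : D * load H w' v ≤ D * (1 + δ) := by gcongr; linarith
    have h4 : D * (1 - δ) ≤ D * load H w' v := by gcongr; linarith
    have h5 : D * (2 * δ) ≤ D * (n : ℝ) ^ (-(0.01) : ℝ) := by gcongr
    constructor <;> linarith
  · have h1 := (abs_lt.1 (hS₁ v)).2
    have h3 : D * load H w' v ≤ D * (3 / 2) := by gcongr; exact hload v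
    have h5 : (n : ℝ) ^ (-(0.01) : ℝ) * D ≤ 1 * D := by gcongr
    linarith
end

section
/- For every integer k ≥ 2 and reals r > 1 and a > 0, there exist γ = γ(k,r,a) > 0 and d_0 = d_0(k,r,a) such that for every positive integer n and every D ≥ d_0 the following holds: every k-uniform hypergraph H on n vertices in which all vertices have positive degree and which satisfies (1) d_H(x) = (1 ± γ)D for all vertices x with at most γn exceptions, (2) d_H(x) < rD for all vertices x, and (3) d_H({x,y}) < γD for any two distinct vertices x, y, contains a matching of size at least (1 - (k-1)a)·(n/k). -/
section Nibble

variable {V : Type*} [DecidableEq V]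

/-- The edges of `H` that are disjoint from `e`. -/
def removeEdge (H : Finset (Finset V)) (e : Finset V) : Finset (Finset V) :=
  H.filter (fun f => Disjoint e f)

/-- The squared deviation of the degrees on `U` from the target `T`. -/
noncomputable def potential (H : Finset (Finset V)) (U : Finset V) (T : ℝ) : ℝ :=
  ∑ x ∈ U, ((vdeg H x : ℝ) - T) ^ 2

/-- The number of edges at `x` that are lost when the vertices of `e` are deleted. -/
def degLoss (H : Finset (Finset V)) (e : Finset V) (x : V) : ℕ :=
  (H.filter (fun f => x ∈ f ∧ ¬ Disjoint e f)).card

lemma vdeg_mono {H H' : Finset (Finset V)} (h : H' ⊆ H) (x : V) : vdeg H' x ≤ vdeg H x :=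
  Finset.card_le_card (Finset.filter_subset_filter _ h)

lemma pdeg_mono {H H' : Finset (Finset V)} (h : H' ⊆ H) (x y : V) : pdeg H' x y ≤ pdeg H x y :=
  Finset.card_le_card (Finset.filter_subset_filter _ h)

lemma vdeg_removeEdge_add_degLoss (H : Finset (Finset V)) (e : Finset V) (x : V) :
    vdeg (removeEdge H e) x + degLoss H e x = vdeg H x := by
  unfold vdeg removeEdge degLoss
  rw [← Finset.card_filter_add_card_filter_not (s := H.filter (fun f => x ∈ f))
    (fun f => Disjoint e f), Finset.filter_filter, Finset.filter_filter, Finset.filter_filter]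
  simp only [and_comm]

lemma degLoss_le_sum_pdeg (H : Finset (Finset V)) (e : Finset V) (x : V) :
    degLoss H e x ≤ ∑ y ∈ e, pdeg H x y := by
  refine (Finset.card_le_card ?_).trans Finset.card_biUnion_le
  intro f hf
  simp only [Finset.mem_filter, Finset.not_disjoint_iff, Finset.mem_biUnion] at hf ⊢
  obtain ⟨hfH, hx, y, hye, hyf⟩ := hf
  exact ⟨y, hye, hfH, hx, hyf⟩

lemma degLoss_le {H : Finset (Finset V)} {e : Finset V} {x : V} {P : ℝ}
    (hP : ∀ x y, x ≠ y → (pdeg H x y : ℝ) ≤ P) (hx : x ∉ e) :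
    (degLoss H e x : ℝ) ≤ e.card * P := by
  calc (degLoss H e x : ℝ) ≤ ∑ y ∈ e, (pdeg H x y : ℝ) := by
        exact_mod_cast degLoss_le_sum_pdeg H e x
    _ ≤ ∑ _y ∈ e, P := Finset.sum_le_sum fun y hy => hP x y (by rintro rfl; exact hx hy)
    _ = e.card * P := by simp

lemma sum_vdeg_mul {H : Finset (Finset V)} {U : Finset V} (hU : ∀ e ∈ H, e ⊆ U) (g : V → ℝ) :
    ∑ x ∈ U, (vdeg H x : ℝ) * g x = ∑ f ∈ H, ∑ x ∈ f, g x := by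
  have h : ∀ x ∈ U, (vdeg H x : ℝ) * g x = ∑ f ∈ H with x ∈ f, g x := by
    intro x _
    simp [vdeg]
  rw [Finset.sum_congr rfl h]
  apply Finset.sum_comm'
  intro x f
  simp only [Finset.mem_filter]
  exact ⟨fun h => ⟨h.2.2, h.2.1⟩, fun h => ⟨hU f h.2 h.1, h.2, h.1⟩⟩

lemma sum_vdeg_eq_sum_card_inter (H : Finset (Finset V)) (s : Finset V) :
    ∑ y ∈ s, vdeg H y = ∑ e ∈ H, (s.filter (· ∈ e)).card := by
  simp only [vdeg, Finset.card_filter]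
  exact Finset.sum_comm

lemma sum_offDiag_pdeg_eq (H : Finset (Finset V)) (f : Finset V) :
    ∑ p ∈ f.offDiag, pdeg H p.1 p.2 = ∑ e ∈ H, (f.filter (· ∈ e)).offDiag.card := by
  have h : ∀ e : Finset V, (f.filter (· ∈ e)).offDiag
      = f.offDiag.filter (fun p => p.1 ∈ e ∧ p.2 ∈ e) := by
    intro e
    ext p
    simp only [Finset.mem_offDiag, Finset.mem_filter]
    tauto
  simp only [h, pdeg, Finset.card_filter]
  exact Finset.sum_comm

/-- The number of edges avoiding `x` and meeting `f`. -/
def crossCount (H : Finset (Finset V)) (f : Finset V) (x : V) : ℕ :=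
  (H.filter (fun e => x ∉ e ∧ ¬ Disjoint e f)).card

lemma crossCount_le (H : Finset (Finset V)) (f : Finset V) (x : V) :
    crossCount H f x ≤ ∑ y ∈ f.erase x, vdeg H y := by
  refine (Finset.card_le_card ?_).trans Finset.card_biUnion_le
  intro e he
  simp only [Finset.mem_filter, Finset.not_disjoint_iff, Finset.mem_biUnion,
    Finset.mem_erase] at he ⊢
  obtain ⟨heH, hx, y, hye, hyf⟩ := he
  exact ⟨y, ⟨by rintro rfl; exact hx hye, hyf⟩, heH, hye⟩

lemma sum_erase_vdeg_le {H : Finset (Finset V)} {f : Finset V} {x : V} (hx : x ∈ f) :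
    ∑ y ∈ f.erase x, vdeg H y ≤ crossCount H f x + ∑ p ∈ f.offDiag, pdeg H p.1 p.2 := by
  rw [sum_vdeg_eq_sum_card_inter, sum_offDiag_pdeg_eq, crossCount, Finset.card_filter,
    ← Finset.sum_add_distrib]
  refine Finset.sum_le_sum fun e _ => ?_
  rw [Finset.offDiag_card]
  by_cases hxe : x ∈ e
  · have h : f.filter (· ∈ e) = insert x ((f.erase x).filter (· ∈ e)) := by
      ext y
      simp only [Finset.mem_filter, Finset.mem_insert, Finset.mem_erase]
      grind
    rw [h, Finset.card_insert_of_notMem (by simp)]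
    generalize ((f.erase x).filter (· ∈ e)).card = j
    have : (j + 1) * (j + 1) = j * j + 2 * j + 1 := by ring
    simp only [hxe, not_true_eq_false, false_and, if_false]
    have := Nat.zero_le (j * j)
    omega
  · have h : f.filter (· ∈ e) = (f.erase x).filter (· ∈ e) := by
      ext y
      simp only [Finset.mem_filter, Finset.mem_erase]
      grind
    rw [h]
    by_cases hd : Disjoint e f
    · have h0 : (f.erase x).filter (· ∈ e) = ∅ := by
        rw [Finset.filter_eq_empty_iff]
        intro y hy hye
        exact Finset.disjoint_left.1 hd hye (Finset.mem_of_mem_erase hy)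
      rw [h0]
      simp
    · simp only [hxe, hd, not_false_eq_true, and_self, if_true]
      generalize ((f.erase x).filter (· ∈ e)).card = j
      rcases Nat.lt_or_ge j 2 with hj | hj
      · omega
      · have : 2 * j ≤ j * j := Nat.mul_le_mul_right j hj
        omega

lemma sum_degLoss_eq_sum_crossCount (H : Finset (Finset V)) (x : V) :
    ∑ e ∈ H with x ∉ e, degLoss H e x = ∑ f ∈ H with x ∈ f, crossCount H f x := by
  simp only [degLoss, crossCount, Finset.card_filter, Finset.sum_filter]
  have h : ∀ (p : Prop) [Decidable p] (g : Finset V → ℕ),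
      (if p then ∑ f ∈ H, g f else 0) = ∑ f ∈ H, if p then g f else 0 := by
    intro p _ g
    split_ifs <;> simp
  simp only [h]
  rw [Finset.sum_comm]
  refine Finset.sum_congr rfl fun f _ => Finset.sum_congr rfl fun e _ => ?_
  split_ifs <;> tauto

/-- The total degree of the other vertices on the edges at `x`. -/
def nbrDeg (H : Finset (Finset V)) (x : V) : ℕ :=
  ∑ f ∈ H with x ∈ f, ∑ y ∈ f.erase x, vdeg H y

lemma sum_degLoss_le (H : Finset (Finset V)) (x : V) :
    ∑ e ∈ H with x ∉ e, degLoss H e x ≤ nbrDeg H x := by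
  rw [sum_degLoss_eq_sum_crossCount]
  exact Finset.sum_le_sum fun f _ => crossCount_le H f x

lemma nbrDeg_le {H : Finset (Finset V)} {k : ℕ} (hk : ∀ e ∈ H, e.card = k) {P : ℝ} (hP0 : 0 ≤ P)
    (hP : ∀ x y, x ≠ y → (pdeg H x y : ℝ) ≤ P) (x : V) :
    (nbrDeg H x : ℝ) ≤ (∑ e ∈ H with x ∉ e, (degLoss H e x : ℝ)) + vdeg H x * (k ^ 2 * P) := by
  have h : (nbrDeg H x : ℝ)
      ≤ ∑ f ∈ H with x ∈ f, ((crossCount H f x : ℝ) + k ^ 2 * P) := by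
    rw [nbrDeg, Nat.cast_sum]
    refine Finset.sum_le_sum fun f hf => ?_
    obtain ⟨hfH, hxf⟩ := Finset.mem_filter.1 hf
    have h1 : ((∑ y ∈ f.erase x, vdeg H y : ℕ) : ℝ)
        ≤ crossCount H f x + ∑ p ∈ f.offDiag, (pdeg H p.1 p.2 : ℝ) := by
      exact_mod_cast sum_erase_vdeg_le hxf
    have h2 : ∑ p ∈ f.offDiag, (pdeg H p.1 p.2 : ℝ) ≤ ∑ _p ∈ f.offDiag, P :=
      Finset.sum_le_sum fun p hp => hP _ _ (Finset.mem_offDiag.1 hp).2.2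
    have h3 : (f.offDiag.card : ℝ) ≤ (k : ℝ) ^ 2 := by
      rw [Finset.offDiag_card, hk f hfH, sq]
      exact_mod_cast Nat.sub_le _ _
    have h4 := mul_le_mul_of_nonneg_right h3 hP0
    rw [Finset.sum_const, nsmul_eq_mul] at h2
    linarith
  have h5 : (∑ e ∈ H with x ∉ e, (degLoss H e x : ℝ))
      = ∑ f ∈ H with x ∈ f, (crossCount H f x : ℝ) := by
    exact_mod_cast sum_degLoss_eq_sum_crossCount H x
  rw [Finset.sum_add_distrib, Finset.sum_const, nsmul_eq_mul] at h
  rw [h5]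
  exact h

lemma nbrDeg_le_mul {H : Finset (Finset V)} {k : ℕ} (hk : ∀ e ∈ H, e.card = k) {R : ℝ}
    (hR0 : 0 ≤ R) (hR : ∀ x, (vdeg H x : ℝ) ≤ R) (x : V) :
    (nbrDeg H x : ℝ) ≤ k * R ^ 2 := by
  have h : (nbrDeg H x : ℝ) ≤ ∑ f ∈ H with x ∈ f, k * R := by
    rw [nbrDeg, Nat.cast_sum]
    refine Finset.sum_le_sum fun f hf => ?_
    rw [Nat.cast_sum]
    calc ∑ y ∈ f.erase x, (vdeg H y : ℝ) ≤ ∑ _y ∈ f.erase x, R :=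
          Finset.sum_le_sum fun y _ => hR y
      _ = (f.erase x).card * R := by simp
      _ ≤ k * R := by
          refine mul_le_mul_of_nonneg_right ?_ hR0
          rw [← hk f (Finset.mem_filter.1 hf).1]
          exact_mod_cast Finset.card_erase_le
  rw [Finset.sum_const, nsmul_eq_mul] at h
  have h1 : ((H.filter (fun f => x ∈ f)).card : ℝ) ≤ R := hR x
  have h2 : ((H.filter (fun f => x ∈ f)).card : ℝ) * (k * R) ≤ R * (k * R) :=
    mul_le_mul_of_nonneg_right h1 (by positivity)
  linarith

/-- The quadratic form of the adjacency matrix of `H` is bounded below by minus the degree form. -/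
lemma neg_sum_mul_nbrDeg_le {H : Finset (Finset V)} {U : Finset V} {k : ℕ}
    (hk : ∀ e ∈ H, e.card = k) (hU : ∀ e ∈ H, e ⊆ U) (T : ℝ) :
    -∑ x ∈ U, ((vdeg H x : ℝ) - T) * nbrDeg H x
      ≤ -((k - 1) * T) * ∑ x ∈ U, (vdeg H x : ℝ) * ((vdeg H x : ℝ) - T)
        + ∑ x ∈ U, (vdeg H x : ℝ) * ((vdeg H x : ℝ) - T) ^ 2 := by
  set δ : V → ℝ := fun x => (vdeg H x : ℝ) - T with hδ
  have h1 : ∑ x ∈ U, δ x * nbrDeg H x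
      = ∑ f ∈ H, ∑ x ∈ f, δ x * ((k - 1) * T + (∑ y ∈ f, δ y) - δ x) := by
    have : ∀ x ∈ U, δ x * nbrDeg H x
        = ∑ f ∈ H with x ∈ f, δ x * ((k - 1) * T + (∑ y ∈ f, δ y) - δ x) := by
      intro x _
      rw [nbrDeg, Nat.cast_sum, Finset.mul_sum]
      refine Finset.sum_congr rfl fun f hf => ?_
      obtain ⟨hfH, hxf⟩ := Finset.mem_filter.1 hf
      have e1 : ∑ y ∈ f, δ y = (∑ y ∈ f, (vdeg H y : ℝ)) - k * T := by
        simp [hδ, Finset.sum_sub_distrib, hk f hfH]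
      have e2 := Finset.add_sum_erase f (fun y => (vdeg H y : ℝ)) hxf
      rw [Nat.cast_sum, e1, ← e2]
      simp only [hδ]
      ring
    rw [Finset.sum_congr rfl this]
    apply Finset.sum_comm'
    intro x f
    simp only [Finset.mem_filter]
    exact ⟨fun h => ⟨h.2.2, h.2.1⟩, fun h => ⟨hU f h.2 h.1, h.2, h.1⟩⟩
  have h2 := sum_vdeg_mul hU δ
  have h3 := sum_vdeg_mul hU (fun x => δ x ^ 2)
  change -∑ x ∈ U, δ x * nbrDeg H x ≤ -((k - 1) * T) * ∑ x ∈ U, (vdeg H x : ℝ) * δ x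
        + ∑ x ∈ U, (vdeg H x : ℝ) * δ x ^ 2
  rw [h1, h2, h3, Finset.mul_sum, ← Finset.sum_add_distrib, ← Finset.sum_neg_distrib]
  refine Finset.sum_le_sum fun f _ => ?_
  have e : ∑ x ∈ f, δ x * ((k - 1) * T + (∑ y ∈ f, δ y) - δ x)
      = (k - 1) * T * (∑ x ∈ f, δ x) + (∑ x ∈ f, δ x) ^ 2 - ∑ x ∈ f, δ x ^ 2 := by
    rw [sq (∑ x ∈ f, δ x), Finset.mul_sum, Finset.sum_mul, ← Finset.sum_add_distrib,
      ← Finset.sum_sub_distrib]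
    refine Finset.sum_congr rfl fun x _ => ?_
    ring
  rw [e]
  nlinarith [sq_nonneg (∑ x ∈ f, δ x)]

lemma sum_vdeg_eq_mul_card {H : Finset (Finset V)} {U : Finset V} {k : ℕ}
    (hk : ∀ e ∈ H, e.card = k) (hU : ∀ e ∈ H, e ⊆ U) :
    ∑ x ∈ U, (vdeg H x : ℝ) = k * H.card := by
  have h := sum_vdeg_mul hU (fun _ => (1 : ℝ))
  have h' : ∑ f ∈ H, ∑ _x ∈ f, (1 : ℝ) = ∑ _f ∈ H, (k : ℝ) :=
    Finset.sum_congr rfl fun f hf => by simp [hk f hf]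
  rw [h'] at h
  simp only [mul_one, Finset.sum_const, nsmul_eq_mul] at h
  rw [h, mul_comm]

lemma potential_removeEdge_le {H : Finset (Finset V)} {U e : Finset V} {k : ℕ}
    (hk : e.card = k) {P : ℝ} (hP : ∀ x y, x ≠ y → (pdeg H x y : ℝ) ≤ P) (T s : ℝ) :
    potential (removeEdge H e) (U \ e) (T - s)
      ≤ potential H U T + 2 * s ^ 2 * U.card
        + ∑ x ∈ U \ e, (2 * ((vdeg H x : ℝ) - T) * s
            + (2 * (k * P) - 2 * ((vdeg H x : ℝ) - T)) * degLoss H e x) := by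
  have h1 : ∑ x ∈ U \ e, (((vdeg H x : ℝ) - T) ^ 2 + 2 * s ^ 2)
      ≤ potential H U T + 2 * s ^ 2 * U.card := by
    calc ∑ x ∈ U \ e, (((vdeg H x : ℝ) - T) ^ 2 + 2 * s ^ 2)
        ≤ ∑ x ∈ U, (((vdeg H x : ℝ) - T) ^ 2 + 2 * s ^ 2) :=
          Finset.sum_le_sum_of_subset_of_nonneg Finset.sdiff_subset
            fun _ _ _ => by positivity
      _ = potential H U T + 2 * s ^ 2 * U.card := by
          rw [Finset.sum_add_distrib, potential, Finset.sum_const, nsmul_eq_mul, mul_comm (_ : ℝ)]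
  refine le_trans ?_ (add_le_add_left h1 _)
  rw [← Finset.sum_add_distrib, potential]
  refine Finset.sum_le_sum fun x hx => ?_
  have h2 := degLoss_le hP (Finset.mem_sdiff.1 hx).2
  rw [hk] at h2
  have h3 : (vdeg (removeEdge H e) x : ℝ) + degLoss H e x = vdeg H x := by
    exact_mod_cast vdeg_removeEdge_add_degLoss H e x
  have h4 : (0 : ℝ) ≤ degLoss H e x := Nat.cast_nonneg _
  rw [eq_sub_of_add_eq h3]
  nlinarith [sq_nonneg (s + degLoss H e x), mul_nonneg h4 (sub_nonneg.2 h2)]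

lemma sum_deviation_mul_drift_le {H : Finset (Finset V)} {U : Finset V} {k : ℕ} (hk1 : 1 ≤ k)
    (hk : ∀ e ∈ H, e.card = k) (hU : ∀ e ∈ H, e ⊆ U) (hN : 0 < U.card) {R P T : ℝ} (hT0 : 0 ≤ T)
    (hTR : T ≤ R) (hP0 : 0 ≤ P) (hR : ∀ x, (vdeg H x : ℝ) ≤ R)
    (hP : ∀ x y, x ≠ y → (pdeg H x y : ℝ) ≤ P) :
    ∑ x ∈ U, ((vdeg H x : ℝ) - T) * ((k * (k - 1) / U.card * T) * ((H.card : ℝ) - vdeg H x)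
        - ∑ e ∈ H with x ∉ e, (degLoss H e x : ℝ))
      ≤ R * potential H U T + k ^ 2 * P * R ^ 2 * U.card + k ^ 2 * R ^ 3 := by
  have hR0 : 0 ≤ R := hT0.trans hTR
  have hN' : (0 : ℝ) < U.card := by exact_mod_cast hN
  have hk1' : (1 : ℝ) ≤ k := by exact_mod_cast hk1
  set N : ℝ := (U.card : ℝ) with hNdef
  set δ : V → ℝ := fun x => (vdeg H x : ℝ) - T with hδ
  set κ : ℝ := k * (k - 1) / N with hκ
  set S : ℝ := ∑ x ∈ U, δ x with hS
  set Φ := potential H U T with hΦ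
  have hκ0 : 0 ≤ κ := div_nonneg (mul_nonneg (by positivity) (by linarith)) hN'.le
  have hκN : κ * N = k * (k - 1) := by rw [hκ]; field_simp
  have hd0 : ∀ x, (0 : ℝ) ≤ vdeg H x := fun x => Nat.cast_nonneg _
  have hδR : ∀ x, |δ x| ≤ R := fun x => by
    rw [abs_le]; constructor <;> simp only [hδ] <;> linarith [hR x, hd0 x]
  have hm : (k : ℝ) * H.card = N * T + S := by
    have h := sum_vdeg_eq_mul_card hk hU
    rw [hS]
    simp only [hδ, Finset.sum_sub_distrib, Finset.sum_const, nsmul_eq_mul]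
    rw [h]
    ring
  have hdδ : ∑ x ∈ U, (vdeg H x : ℝ) * δ x = Φ + T * S := by
    rw [hΦ, potential, hS, Finset.mul_sum, ← Finset.sum_add_distrib]
    refine Finset.sum_congr rfl fun x _ => ?_
    simp only [hδ]
    ring
  have hdδ2 : ∑ x ∈ U, (vdeg H x : ℝ) * δ x ^ 2 ≤ R * Φ := by
    rw [hΦ, potential, Finset.mul_sum]
    exact Finset.sum_le_sum fun x _ => mul_le_mul_of_nonneg_right (hR x) (sq_nonneg _)
  have hCS : S ^ 2 ≤ N * Φ := by
    have := sq_sum_le_card_mul_sum_sq (s := U) (f := δ)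
    simpa [hS, hΦ, potential, hNdef] using this
  have hΦS : -(Φ + T * S) ≤ R ^ 2 * N := by
    rw [← hdδ, ← Finset.sum_neg_distrib]
    calc ∑ x ∈ U, -((vdeg H x : ℝ) * δ x) ≤ ∑ _x ∈ U, R ^ 2 :=
          Finset.sum_le_sum fun x _ => by
            simp only [hδ]
            nlinarith [hd0 x, hR x, mul_nonneg (hd0 x) hT0, sq_nonneg ((vdeg H x : ℝ)),
              mul_le_mul (hR x) hTR hT0 hR0]
      _ = R ^ 2 * N := by simp [hNdef, mul_comm]
  have hpt : ∀ x ∈ U, δ x * ((κ * T) * ((H.card : ℝ) - vdeg H x)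
        - ∑ e ∈ H with x ∉ e, (degLoss H e x : ℝ))
      ≤ κ * T * H.card * δ x - κ * T * (vdeg H x * δ x) - δ x * nbrDeg H x
        + k ^ 2 * P * R ^ 2 := by
    intro x _
    have h1 : ∑ e ∈ H with x ∉ e, (degLoss H e x : ℝ) ≤ nbrDeg H x := by
      exact_mod_cast sum_degLoss_le H x
    have h2 := nbrDeg_le hk hP0 hP x
    set W := ∑ e ∈ H with x ∉ e, (degLoss H e x : ℝ)
    have h3 : (vdeg H x : ℝ) * (k ^ 2 * P) ≤ R * (k ^ 2 * P) :=
      mul_le_mul_of_nonneg_right (hR x) (by positivity)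
    have h4 : δ x * (nbrDeg H x - W) ≤ R * (R * (k ^ 2 * P)) :=
      mul_le_mul ((le_abs_self _).trans (hδR x)) (by linarith) (by linarith) hR0
    linarith
  refine (Finset.sum_le_sum hpt).trans ?_
  have hq := neg_sum_mul_nbrDeg_le hk hU T
  change -∑ x ∈ U, δ x * nbrDeg H x ≤ -((k - 1) * T) * ∑ x ∈ U, (vdeg H x : ℝ) * δ x
        + ∑ x ∈ U, (vdeg H x : ℝ) * δ x ^ 2 at hq
  rw [Finset.sum_add_distrib, Finset.sum_sub_distrib, Finset.sum_sub_distrib, ← Finset.mul_sum,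
    ← Finset.mul_sum, hdδ, Finset.sum_const, nsmul_eq_mul, ← hS, ← hNdef]
  rw [hdδ] at hq
  have hκm : κ * T * H.card * S = (k - 1) * T * (T * S + S ^ 2 / N) := by
    have : κ * H.card = (k - 1) / N * (N * T + S) := by rw [← hm, hκ]; ring
    calc κ * T * H.card * S = (κ * H.card) * T * S := by ring
      _ = _ := by rw [this]; field_simp
  have hCS' : S ^ 2 / N ≤ Φ := by rw [div_le_iff₀ hN']; linarith
  have h5 : (k - 1) * T * (S ^ 2 / N) ≤ (k - 1) * T * Φ :=
    mul_le_mul_of_nonneg_left hCS' (mul_nonneg (by linarith) hT0)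
  have h6 : -(κ * T * (Φ + T * S)) ≤ k ^ 2 * R ^ 3 := by
    have a1 : κ * T * (-(Φ + T * S)) ≤ κ * T * (R ^ 2 * N) :=
      mul_le_mul_of_nonneg_left hΦS (by positivity)
    have a2 : κ * T * (R ^ 2 * N) = (k * (k - 1)) * (T * R ^ 2) := by rw [← hκN]; ring
    have a3 : (k * (k - 1) : ℝ) * (T * R ^ 2) ≤ k ^ 2 * (R * R ^ 2) :=
      mul_le_mul (by nlinarith) (mul_le_mul_of_nonneg_right hTR (by positivity)) (by positivity)
        (by positivity)
    linarith
  rw [hκm]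
  linarith

/-- Averaging over all edges, some edge can be added to the matching without increasing the
potential by much. -/
lemma exists_edge_potential_le {H : Finset (Finset V)} {U : Finset V} {k : ℕ} (hk1 : 1 ≤ k)
    (hk : ∀ e ∈ H, e.card = k) (hU : ∀ e ∈ H, e ⊆ U) (hH : H.Nonempty) {R P T : ℝ} (hT0 : 0 ≤ T)
    (hTR : T ≤ R) (hP0 : 0 ≤ P) (hR : ∀ x, (vdeg H x : ℝ) ≤ R)
    (hP : ∀ x y, x ≠ y → (pdeg H x y : ℝ) ≤ P) :
    ∃ e ∈ H, H.card * potential (removeEdge H e) (U \ e) (T - k * (k - 1) / U.card * T)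
      ≤ H.card * potential H U T + 2 * R * potential H U T + 4 * k ^ 2 * P * R ^ 2 * U.card
        + 4 * k ^ 4 * R ^ 3 := by
  have hR0 : 0 ≤ R := hT0.trans hTR
  have hk1' : (1 : ℝ) ≤ k := by exact_mod_cast hk1
  have hN : 0 < U.card := by
    obtain ⟨e, he⟩ := hH
    have := Finset.card_le_card (hU e he)
    rw [hk e he] at this
    omega
  have hN' : (0 : ℝ) < U.card := by exact_mod_cast hN
  set s : ℝ := k * (k - 1) / U.card * T with hs
  set m : ℝ := (H.card : ℝ) with hmdef
  suffices h : ∑ e ∈ H, potential (removeEdge H e) (U \ e) (T - s)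
      ≤ m * potential H U T + 2 * R * potential H U T + 4 * k ^ 2 * P * R ^ 2 * U.card
        + 4 * k ^ 4 * R ^ 3 by
    obtain ⟨e, he, hle⟩ := Finset.exists_min_image H
      (fun e => potential (removeEdge H e) (U \ e) (T - s)) hH
    refine ⟨e, he, le_trans ?_ h⟩
    rw [hmdef, ← nsmul_eq_mul]
    exact Finset.card_nsmul_le_sum _ _ _ hle
  have hmR : m ≤ U.card * R := by
    have h := sum_vdeg_eq_mul_card hk hU
    have h1 : ∑ x ∈ U, (vdeg H x : ℝ) ≤ U.card * R := by
      rw [← nsmul_eq_mul]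
      exact Finset.sum_le_card_nsmul _ _ _ fun x _ => hR x
    nlinarith
  have hswap : ∀ g : V → Finset V → ℝ,
      ∑ e ∈ H, ∑ x ∈ U \ e, g x e = ∑ x ∈ U, ∑ e ∈ H with x ∉ e, g x e := by
    intro g
    apply Finset.sum_comm'
    intro e x
    simp only [Finset.mem_filter, Finset.mem_sdiff]
    tauto
  have h1 := Finset.sum_le_sum fun e he => potential_removeEdge_le (U := U) (hk e he) hP T s
  refine h1.trans ?_
  rw [Finset.sum_add_distrib, Finset.sum_const, nsmul_eq_mul, hswap]
  have h2 : ∀ x ∈ U, ∑ e ∈ H with x ∉ e, (2 * ((vdeg H x : ℝ) - T) * s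
            + (2 * (k * P) - 2 * ((vdeg H x : ℝ) - T)) * degLoss H e x)
      ≤ 2 * (((vdeg H x : ℝ) - T) * (s * (m - vdeg H x)
        - ∑ e ∈ H with x ∉ e, (degLoss H e x : ℝ))) + 2 * k ^ 2 * P * R ^ 2 := by
    intro x _
    rw [Finset.sum_add_distrib, Finset.sum_const, nsmul_eq_mul, ← Finset.mul_sum]
    have h3 : ((H.filter (fun e => x ∉ e)).card : ℝ) = m - vdeg H x := by
      have := Finset.card_filter_add_card_filter_not (s := H) (fun e => x ∈ e)
      rw [hmdef, ← this, vdeg]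
      push_cast
      ring
    have h4 : ∑ e ∈ H with x ∉ e, (degLoss H e x : ℝ) ≤ k * R ^ 2 :=
      le_trans (by exact_mod_cast sum_degLoss_le H x) (nbrDeg_le_mul hk hR0 hR x)
    have h5 := mul_le_mul_of_nonneg_left h4 (by positivity : 0 ≤ 2 * (k * P))
    rw [h3]
    linarith
  have h6 := Finset.sum_le_sum h2
  rw [Finset.sum_add_distrib, ← Finset.mul_sum, Finset.sum_const, nsmul_eq_mul] at h6
  have h7 := sum_deviation_mul_drift_le hk1 hk hU hN hT0 hTR hP0 hR hP
  rw [← hs, ← hmdef] at h7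
  have h8 : m * (2 * s ^ 2 * U.card) ≤ 2 * k ^ 4 * R ^ 3 := by
    have e0 : 0 ≤ s := mul_nonneg (div_nonneg (mul_nonneg (by positivity) (by linarith)) hN'.le) hT0
    have e1 : s * U.card = k * (k - 1) * T := by rw [hs]; field_simp
    have e2 : s * U.card ≤ k ^ 2 * R := by
      rw [e1]
      exact mul_le_mul (by nlinarith) hTR hT0 (by positivity)
    calc m * (2 * s ^ 2 * U.card) ≤ U.card * R * (2 * s ^ 2 * U.card) :=
          mul_le_mul_of_nonneg_right hmR (by positivity)
      _ = 2 * R * (s * U.card) ^ 2 := by ring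
      _ ≤ 2 * R * (k ^ 2 * R) ^ 2 := by gcongr
      _ = 2 * k ^ 4 * R ^ 3 := by ring
  have h9 : (k : ℝ) ^ 2 * R ^ 3 ≤ k ^ 4 * R ^ 3 :=
    mul_le_mul_of_nonneg_right (pow_le_pow_right₀ hk1' (by norm_num)) (by positivity)
  linarith

lemma mul_div_two_le_card {H : Finset (Finset V)} {U : Finset V} {k : ℕ}
    (hk : ∀ e ∈ H, e.card = k) (hU : ∀ e ∈ H, e ⊆ U) {T : ℝ} (hT0 : 0 ≤ T)
    (hΦ : potential H U T ≤ U.card * T ^ 2 / 4) : U.card * T / 2 ≤ k * H.card := by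
  have hCS := sq_sum_le_card_mul_sum_sq (s := U) (f := fun x => (vdeg H x : ℝ) - T)
  rw [Finset.sum_sub_distrib, sum_vdeg_eq_mul_card hk hU, Finset.sum_const, nsmul_eq_mul] at hCS
  have h1 : (U.card : ℝ) * potential H U T ≤ U.card * (U.card * T ^ 2 / 4) :=
    mul_le_mul_of_nonneg_left hΦ (Nat.cast_nonneg _)
  have h2 : ((k : ℝ) * H.card - U.card * T) ^ 2 ≤ (U.card * T / 2) ^ 2 := by
    refine hCS.trans (h1.trans (le_of_eq ?_))
    ring
  have h3 := (abs_le.1 (abs_le_of_sq_le_sq h2 (by positivity))).1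
  linarith

/-- One step of the greedy process, with the relative growth of the potential made explicit. -/
lemma exists_edge_potential_growth {H : Finset (Finset V)} {U : Finset V} {k : ℕ} (hk1 : 1 ≤ k)
    (hk : ∀ e ∈ H, e.card = k) (hU : ∀ e ∈ H, e ⊆ U) {n a r c γ D T : ℝ} (hn : 0 < n)
    (ha : 0 < a) (hr : 1 < r) (hc : 0 < c) (hγ : 0 < γ) (hD : 0 < D) (hcT : c * D ≤ T)
    (hTD : T ≤ D) (hN : a * n ≤ U.card) (hnγ : 1 ≤ 2 * γ * n)
    (hΦ : potential H U T ≤ U.card * T ^ 2 / 4)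
    (hR : ∀ x, (vdeg H x : ℝ) ≤ r * D) (hP : ∀ x y, x ≠ y → (pdeg H x y : ℝ) ≤ γ * D) :
    ∃ e ∈ H, potential (removeEdge H e) (U \ e) (T - k * (k - 1) / U.card * T)
      ≤ (1 + 4 * k * r / (c * a) / n) * potential H U T
        + (8 * k ^ 3 * r ^ 2 / c + 16 * k ^ 5 * r ^ 3 / (c * a)) * γ * D ^ 2 := by
  have hT0 : 0 < T := lt_of_lt_of_le (by positivity) hcT
  have hN0 : (0 : ℝ) < U.card := lt_of_lt_of_le (by positivity) hN
  have hk0 : (0 : ℝ) < k := by exact_mod_cast hk1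
  have hkm := mul_div_two_le_card hk hU hT0.le hΦ
  have hm : U.card * (c * D) / (2 * k) ≤ (H.card : ℝ) := by
    rw [div_le_iff₀ (by positivity)]
    have := mul_le_mul_of_nonneg_left hcT hN0.le
    linarith
  have hm0 : (0 : ℝ) < H.card := lt_of_lt_of_le (by positivity) hm
  have hne : H.Nonempty := Finset.card_pos.1 (by exact_mod_cast hm0)
  have hTR : T ≤ r * D := hTD.trans (le_mul_of_one_le_left hD.le hr.le)
  obtain ⟨e, he, hle⟩ := exists_edge_potential_le hk1 hk hU hne hT0.le hTR
    (by positivity : 0 ≤ γ * D) hR hP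
  refine ⟨e, he, ?_⟩
  set Φ := potential H U T
  have hΦ0 : 0 ≤ Φ := Finset.sum_nonneg fun _ _ => sq_nonneg _
  refine le_of_mul_le_mul_left (hle.trans ?_) hm0
  have hr0 : 0 < r := by linarith
  have h1 : 2 * (r * D) ≤ H.card * (4 * k * r / (c * a) / n) := by
    calc 2 * (r * D) = (a * n) * (c * D) / (2 * k) * (4 * k * r / (c * a) / n) := by
          field_simp
          ring
      _ ≤ U.card * (c * D) / (2 * k) * (4 * k * r / (c * a) / n) := by gcongr
      _ ≤ _ := by gcongr
  have h2 : 4 * k ^ 2 * (γ * D) * (r * D) ^ 2 * U.card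
      ≤ H.card * (8 * k ^ 3 * r ^ 2 / c * γ * D ^ 2) := by
    calc 4 * k ^ 2 * (γ * D) * (r * D) ^ 2 * U.card
        = U.card * (c * D) / (2 * k) * (8 * k ^ 3 * r ^ 2 / c * γ * D ^ 2) := by
          field_simp
          ring
      _ ≤ _ := by gcongr
  have h3 : 4 * k ^ 4 * (r * D) ^ 3 ≤ H.card * (16 * k ^ 5 * r ^ 3 / (c * a) * γ * D ^ 2) := by
    calc 4 * k ^ 4 * (r * D) ^ 3 ≤ 4 * k ^ 4 * (r * D) ^ 3 * (2 * γ * n) :=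
          le_mul_of_one_le_right (by positivity) hnγ
      _ = (a * n) * (c * D) / (2 * k) * (16 * k ^ 5 * r ^ 3 / (c * a) * γ * D ^ 2) := by
          field_simp
          ring
      _ ≤ U.card * (c * D) / (2 * k) * (16 * k ^ 5 * r ^ 3 / (c * a) * γ * D ^ 2) := by gcongr
      _ ≤ _ := by gcongr
  have h4 := mul_le_mul_of_nonneg_right h1 hΦ0
  linarith

/-- `M` is a matching of size `t` in `H` avoiding `U`, and `H'` is a sub-hypergraph on the
set `U` of the remaining vertices. -/
structure IsPartialMatching [Fintype V] (H : Finset (Finset V)) (k t : ℕ)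
    (M H' : Finset (Finset V)) (U : Finset V) : Prop where
  subset : M ⊆ H
  pairwise : (M : Set (Finset V)).Pairwise (fun e f => Disjoint e f)
  card_eq : M.card = t
  rest_subset : H' ⊆ H
  edge_subset : ∀ e ∈ H', e ⊆ U
  disjoint : ∀ f ∈ M, Disjoint f U
  card_add : U.card + k * t = Fintype.card V

lemma IsPartialMatching.insert [Fintype V] {H M H' : Finset (Finset V)} {k t : ℕ} {U e : Finset V}
    (h : IsPartialMatching H k t M H' U) (he : e ∈ H') (hk : e.card = k) (hk1 : 1 ≤ k) :
    IsPartialMatching H k (t + 1) (insert e M) (removeEdge H' e) (U \ e) := by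
  have heU := h.edge_subset e he
  have hdisj : ∀ f ∈ M, Disjoint f e := fun f hf => (h.disjoint f hf).mono_right heU
  have heM : e ∉ M := by
    intro heM
    have := hdisj e heM
    rw [disjoint_self, Finset.bot_eq_empty] at this
    rw [this, Finset.card_empty] at hk
    omega
  refine ⟨?_, ?_, ?_, ?_, ?_, ?_, ?_⟩
  · exact Finset.insert_subset (h.rest_subset he) h.subset
  · rw [Finset.coe_insert]
    refine h.pairwise.insert fun f hf _ => ?_
    have := hdisj f (by simpa using hf)
    exact ⟨this.symm, this⟩
  · rw [Finset.card_insert_of_notMem heM, h.card_eq]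
  · exact (Finset.filter_subset _ _).trans h.rest_subset
  · intro f hf
    obtain ⟨hfH, hef⟩ := Finset.mem_filter.1 hf
    exact Finset.subset_sdiff.2 ⟨h.edge_subset f hfH, hef.symm⟩
  · intro f hf
    rcases Finset.mem_insert.1 hf with rfl | hf
    · exact Finset.disjoint_sdiff
    · exact (h.disjoint f hf).mono_right Finset.sdiff_subset
  · have h1 := Finset.card_sdiff_add_card_eq_card heU
    have h2 := h.card_add
    rw [mul_add]
    omega

lemma exp_neg_two_mul_le {y : ℝ} (hy0 : 0 ≤ y) (hy : y ≤ 1 / 2) : Real.exp (-(2 * y)) ≤ 1 - y := by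
  rw [Real.exp_neg]
  refine inv_le_of_inv_le₀ (by linarith) ?_
  refine le_trans ?_ (Real.add_one_le_exp (2 * y))
  rw [inv_le_iff_one_le_mul₀ (by linarith)]
  nlinarith

/-- A hypergraph of nearly regular degree and small codegree has a matching missing at most
an `a` fraction of the vertices, provided the parameters satisfy explicit inequalities. -/
lemma exists_matching_of_potential_le [Fintype V] {H : Finset (Finset V)} {k : ℕ} (hk1 : 1 ≤ k)
    (hk : ∀ e ∈ H, e.card = k) {a r c γ D B C : ℝ} (ha : 0 < a) (hr : 1 < r)
    (hγ : 0 < γ) (hD : 0 < D) (hn : 0 < Fintype.card V)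
    (hc : c = Real.exp (-(2 * (k ^ 2 / a))))
    (hB : B = 4 * k * r / (c * a))
    (hC : C = 8 * k ^ 3 * r ^ 2 / c + 16 * k ^ 5 * r ^ 3 / (c * a))
    (hnγ : 1 ≤ 2 * γ * Fintype.card V) (hna : 2 * k ^ 2 ≤ a * Fintype.card V)
    (hΦ : Real.exp B * (potential H Finset.univ D + Fintype.card V * (C * γ * D ^ 2))
      ≤ a * Fintype.card V * (c * D) ^ 2 / 4)
    (hR : ∀ x, (vdeg H x : ℝ) ≤ r * D) (hP : ∀ x y, x ≠ y → (pdeg H x y : ℝ) ≤ γ * D) :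
    ∃ M ⊆ H, (M : Set (Finset V)).Pairwise (fun e f => Disjoint e f) ∧
      (1 - a) * Fintype.card V ≤ k * M.card := by
  set n : ℝ := (Fintype.card V : ℝ) with hndef
  have hn0 : 0 < n := by rw [hndef]; exact_mod_cast hn
  have hk0 : (0 : ℝ) < k := by exact_mod_cast hk1
  have hk1' : (1 : ℝ) ≤ k := by exact_mod_cast hk1
  have hr0 : 0 < r := by linarith
  have hc0 : 0 < c := hc ▸ Real.exp_pos _
  have hB0 : 0 < B := by rw [hB]; positivity
  have hC0 : 0 < C := by rw [hC]; positivity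
  by_contra hno
  push Not at hno
  have key : ∀ t : ℕ, ∃ M H' U T, IsPartialMatching H k t M H' U ∧
      D * Real.exp (-(2 * (k ^ 2 / a)) * (t / n)) ≤ T ∧ T ≤ D ∧
      potential H' U T ≤ Real.exp (B * (t / n))
        * (potential H Finset.univ D + t * (C * γ * D ^ 2)) := by
    intro t
    induction t with
    | zero =>
      refine ⟨∅, H, Finset.univ, D, ⟨by simp, by simp, rfl, subset_rfl, by simp, by simp, by simp⟩,
        by simp, le_rfl, by simp⟩
    | succ t ih =>
      obtain ⟨M, H', U, T, hM, hTlow, hTD, hpot⟩ := ih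
      have hcard : (U.card : ℝ) + k * t = n := by rw [hndef]; exact_mod_cast hM.card_add
      have hN : a * n ≤ U.card := by
        have := hno M hM.subset hM.pairwise
        rw [hM.card_eq] at this
        linarith
      have hN0 : (0 : ℝ) < U.card := lt_of_lt_of_le (by positivity) hN
      have htn : (t : ℝ) / n ≤ 1 := by
        rw [div_le_one hn0]
        nlinarith [(Nat.cast_nonneg t : (0 : ℝ) ≤ t)]
      have ht0 : (0 : ℝ) ≤ t / n := by positivity
      have hcT : c * D ≤ T := by
        refine le_trans ?_ hTlow
        rw [mul_comm, hc]
        refine mul_le_mul_of_nonneg_left (Real.exp_le_exp.2 ?_) hD.le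
        have : (0 : ℝ) ≤ 2 * (k ^ 2 / a) := by positivity
        nlinarith
      have hpot0 : 0 ≤ potential H Finset.univ D := Finset.sum_nonneg fun _ _ => sq_nonneg _
      have hT0 : 0 < T := lt_of_lt_of_le (by positivity) hcT
      have hpotle : potential H' U T ≤ U.card * T ^ 2 / 4 := by
        have htn' : (t : ℝ) ≤ n := (div_le_one hn0).1 htn
        calc potential H' U T
            ≤ Real.exp (B * (t / n)) * (potential H Finset.univ D + t * (C * γ * D ^ 2)) := hpot
          _ ≤ Real.exp B * (potential H Finset.univ D + n * (C * γ * D ^ 2)) := by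
              gcongr
              exact mul_le_of_le_one_right hB0.le htn
          _ ≤ a * n * (c * D) ^ 2 / 4 := hΦ
          _ ≤ U.card * T ^ 2 / 4 := by gcongr
      have hk' : ∀ e ∈ H', e.card = k := fun e he => hk e (hM.rest_subset he)
      obtain ⟨e, he, hle⟩ := exists_edge_potential_growth hk1 hk' hM.edge_subset hn0 ha hr hc0 hγ hD
        hcT hTD hN hnγ hpotle
        (fun x => le_trans (by exact_mod_cast vdeg_mono hM.rest_subset x) (hR x))
        (fun x y hxy => le_trans (by exact_mod_cast pdeg_mono hM.rest_subset x y) (hP x y hxy))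
      rw [← hB, ← hC] at hle
      have hκ0 : 0 ≤ (k : ℝ) * (k - 1) / U.card * T :=
        mul_nonneg (div_nonneg (mul_nonneg hk0.le (by linarith)) hN0.le) hT0.le
      refine ⟨_, _, _, _, hM.insert he (hk' e he) hk1, ?_, by linarith, hle.trans ?_⟩
      · have hy : (k : ℝ) * (k - 1) / U.card ≤ k ^ 2 / a / n := by
          rw [div_div]
          exact div_le_div₀ (by positivity) (by nlinarith) (by positivity) hN
        have hy2 : (k : ℝ) ^ 2 / a / n ≤ 1 / 2 := by
          rw [div_div, div_le_iff₀ (by positivity)]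
          linarith
        have h1 := exp_neg_two_mul_le (by positivity) hy2
        have h2 : D * Real.exp (-(2 * (k ^ 2 / a)) * ((t + 1 : ℕ) / n))
            = D * Real.exp (-(2 * (k ^ 2 / a)) * (t / n)) * Real.exp (-(2 * (k ^ 2 / a / n))) := by
          rw [mul_assoc, ← Real.exp_add]
          congr 2
          push_cast
          field_simp
          ring
        rw [h2]
        calc _ ≤ T * (1 - k ^ 2 / a / n) :=
              mul_le_mul hTlow h1 (Real.exp_pos _).le hT0.le
          _ ≤ T * (1 - k * (k - 1) / U.card) :=
              mul_le_mul_of_nonneg_left (by linarith) hT0.le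
          _ = _ := by ring
      · have h1 : 1 + B / n ≤ Real.exp (B / n) := by
          linarith [Real.add_one_le_exp (B / n)]
        have h2 : Real.exp (B * ((t + 1 : ℕ) / n)) = Real.exp (B / n) * Real.exp (B * (t / n)) := by
          rw [← Real.exp_add]
          congr 1
          push_cast
          field_simp
          ring
        have h3 : 1 ≤ Real.exp (B * ((t + 1 : ℕ) / n)) := Real.one_le_exp (by positivity)
        have hE : 0 ≤ C * γ * D ^ 2 := by positivity
        have h4 : (1 + B / n) * potential H' U T ≤ Real.exp (B / n) * (Real.exp (B * (t / n))
            * (potential H Finset.univ D + t * (C * γ * D ^ 2))) :=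
          mul_le_mul h1 hpot (Finset.sum_nonneg fun _ _ => sq_nonneg _) (Real.exp_pos _).le
        have h5 := mul_le_mul_of_nonneg_right h3 hE
        rw [← mul_assoc, ← h2] at h4
        push_cast at h4 h5 ⊢
        linarith
  obtain ⟨M, H', U, T, hM, -⟩ := key (Fintype.card V + 1)
  have h1 := hM.card_add
  have h2 : 1 * (Fintype.card V + 1) ≤ k * (Fintype.card V + 1) := Nat.mul_le_mul_right _ hk1
  omega

lemma vdeg_le_card_mul [Fintype V] {H : Finset (Finset V)} {k : ℕ} (hk2 : 2 ≤ k)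
    (hk : ∀ e ∈ H, e.card = k) {P : ℝ} (hP0 : 0 ≤ P)
    (hP : ∀ x y, x ≠ y → (pdeg H x y : ℝ) ≤ P) (x : V) :
    (vdeg H x : ℝ) ≤ Fintype.card V * P := by
  have h : vdeg H x ≤ ∑ y ∈ Finset.univ.erase x, pdeg H x y := by
    refine (Finset.card_le_card ?_).trans Finset.card_biUnion_le
    intro f hf
    obtain ⟨hfH, hxf⟩ := Finset.mem_filter.1 hf
    obtain ⟨y, hy, hyx⟩ := Finset.exists_mem_ne (by rw [hk f hfH]; omega) x
    simp only [Finset.mem_biUnion, Finset.mem_erase, Finset.mem_univ, Finset.mem_filter]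
    exact ⟨y, ⟨hyx, trivial⟩, hfH, hxf, hy⟩
  calc (vdeg H x : ℝ) ≤ ∑ y ∈ Finset.univ.erase x, (pdeg H x y : ℝ) := by exact_mod_cast h
    _ ≤ ∑ _y ∈ Finset.univ.erase x, P :=
        Finset.sum_le_sum fun y hy => hP x y (Finset.ne_of_mem_erase hy).symm
    _ = (Finset.univ.erase x).card * P := by simp
    _ ≤ Fintype.card V * P := by
        refine mul_le_mul_of_nonneg_right ?_ hP0
        exact_mod_cast Finset.card_le_univ _

lemma potential_univ_le [Fintype V] {H : Finset (Finset V)} {r γ D : ℝ} (hr : 1 < r)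
    (hγ0 : 0 ≤ γ) (hγ1 : γ ≤ 1) (hD : 0 < D)
    (hbad : ({x : V | ¬ ((1 - γ) * D ≤ (vdeg H x : ℝ) ∧ (vdeg H x : ℝ) ≤ (1 + γ) * D)}.ncard : ℝ)
      ≤ γ * Fintype.card V)
    (hR : ∀ x, (vdeg H x : ℝ) ≤ r * D) :
    potential H Finset.univ D ≤ (1 + r ^ 2) * γ * Fintype.card V * D ^ 2 := by
  classical
  set p : V → Prop := fun x =>
    ¬ ((1 - γ) * D ≤ (vdeg H x : ℝ) ∧ (vdeg H x : ℝ) ≤ (1 + γ) * D) with hp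
  have hcard : ((Finset.univ.filter p).card : ℝ) ≤ γ * Fintype.card V := by
    rw [← Set.ncard_coe_finset]
    simpa [hp] using hbad
  have hpt : ∀ x ∈ (Finset.univ : Finset V), ((vdeg H x : ℝ) - D) ^ 2
      ≤ γ * D ^ 2 + if p x then (r * D) ^ 2 else 0 := by
    intro x _
    have hd0 : (0 : ℝ) ≤ vdeg H x := Nat.cast_nonneg _
    by_cases hx : p x
    · rw [if_pos hx]
      have : ((vdeg H x : ℝ) - D) ^ 2 ≤ (r * D) ^ 2 :=
        sq_le_sq' (by nlinarith) (by linarith [hR x])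
      nlinarith [mul_nonneg hγ0 (sq_nonneg D)]
    · rw [if_neg hx]
      obtain ⟨h1, h2⟩ := not_not.1 hx
      have h3 : ((vdeg H x : ℝ) - D) ^ 2 ≤ (γ * D) ^ 2 :=
        sq_le_sq' (by linarith) (by linarith)
      have h4 : γ ^ 2 ≤ γ := by nlinarith
      nlinarith [mul_le_mul_of_nonneg_right h4 (sq_nonneg D)]
  refine (Finset.sum_le_sum hpt).trans ?_
  rw [Finset.sum_add_distrib, ← Finset.sum_filter, Finset.sum_const, Finset.sum_const,
    nsmul_eq_mul, nsmul_eq_mul, Finset.card_univ]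
  have := mul_le_mul_of_nonneg_right hcard (sq_nonneg (r * D))
  linarith

end Nibble

/-- Pippenger–Spencer: For every integer `k ≥ 2` and reals `r > 1`,
`a > 0` there exist `γ > 0` and `d₀` such that for every `n` and every `D ≥ d₀`:
every `k`-uniform hypergraph `H` on `n` vertices with all degrees positive
satisfying (1) `d(x) = (1 ± γ)D` for all but at most `γn` vertices,
(2) `d(x) < rD` for all `x`, and (3) `d({x,y}) < γD` for all distinct `x, y`,
contains a matching of size at least `(1 - (k-1)a)(n/k)`. -/
theorem pippenger_spencer (k : ℕ) (hk : 2 ≤ k) (r a : ℝ) (hr : 1 < r) (ha : 0 < a) :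
    ∃ (γ : ℝ) (d₀ : ℝ), 0 < γ ∧ ∀ (n : ℕ) (D : ℝ), 0 < n → d₀ ≤ D →
    ∀ H : Finset (Finset (Fin n)),
      (∀ e ∈ H, e.card = k) →
      (∀ x : Fin n, 0 < vdeg H x) →
      (({x : Fin n | ¬ ((1 - γ) * D ≤ (vdeg H x : ℝ) ∧ (vdeg H x : ℝ) ≤ (1 + γ) * D)}.ncard : ℝ)
        ≤ γ * n) →
      (∀ x : Fin n, (vdeg H x : ℝ) < r * D) →
      (∀ x y : Fin n, x ≠ y → (pdeg H x y : ℝ) < γ * D) →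
      ∃ M ⊆ H, (M : Set (Finset (Fin n))).Pairwise (fun e f => Disjoint e f) ∧
        (1 - ((k : ℝ) - 1) * a) * ((n : ℝ) / k) ≤ (M.card : ℝ) := by
  set c : ℝ := Real.exp (-(2 * (k ^ 2 / a))) with hc
  set B : ℝ := 4 * k * r / (c * a) with hB
  set C : ℝ := 8 * k ^ 3 * r ^ 2 / c + 16 * k ^ 5 * r ^ 3 / (c * a) with hC
  have hk0 : (0 : ℝ) < k := by exact_mod_cast (by omega : 0 < k)
  have hr0 : 0 < r := by linarith
  have hc0 : 0 < c := Real.exp_pos _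
  have hC0 : 0 < C := by positivity
  set γ₁ : ℝ := a * c ^ 2 / (4 * Real.exp B * (1 + r ^ 2 + C))
  set γ : ℝ := min (min (1 / 2) (a / (4 * k ^ 2))) γ₁
  have hγ : 0 < γ := by positivity
  have hγhalf : γ ≤ 1 / 2 := (min_le_left _ _).trans (min_le_left _ _)
  have hγa : γ * (4 * k ^ 2) ≤ a := by
    rw [← le_div_iff₀ (by positivity)]
    exact (min_le_left _ _).trans (min_le_right _ _)
  have hγC : γ * (4 * Real.exp B * (1 + r ^ 2 + C)) ≤ a * c ^ 2 := by
    rw [← le_div_iff₀ (by positivity)]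
    exact min_le_right _ _
  refine ⟨γ, 1, hγ, ?_⟩
  intro n D hn hD H hH _ hbad hR hP
  have hD0 : 0 < D := by linarith
  have hn0 : (0 : ℝ) < n := by exact_mod_cast hn
  have hR' : ∀ x, (vdeg H x : ℝ) ≤ r * D := fun x => (hR x).le
  have hP' : ∀ x y, x ≠ y → (pdeg H x y : ℝ) ≤ γ * D := fun x y hxy => (hP x y hxy).le
  have hnγ : 1 ≤ 2 * γ * n := by
    obtain ⟨x, hx⟩ : ∃ x : Fin n, (1 - γ) * D ≤ (vdeg H x : ℝ) := by
      by_contra hcon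
      push Not at hcon
      have huniv : {x : Fin n | ¬ ((1 - γ) * D ≤ (vdeg H x : ℝ) ∧ (vdeg H x : ℝ) ≤ (1 + γ) * D)}
          = Set.univ := Set.eq_univ_of_forall fun x h => absurd h.1 (not_le.2 (hcon x))
      rw [huniv, Set.ncard_univ, Nat.card_eq_fintype_card, Fintype.card_fin] at hbad
      nlinarith
    have h1 := vdeg_le_card_mul hk hH (by positivity) hP' x
    rw [Fintype.card_fin] at h1
    have h2 : (1 - γ) * D ≤ (n * γ) * D := by linarith
    have h3 := le_of_mul_le_mul_right h2 hD0
    linarith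
  have hna : 2 * (k : ℝ) ^ 2 ≤ a * n := by
    have h1 : γ * (4 * k ^ 2) * n ≤ a * n := mul_le_mul_of_nonneg_right hγa hn0.le
    nlinarith [mul_le_mul_of_nonneg_left hnγ (by positivity : (0 : ℝ) ≤ 2 * k ^ 2)]
  have hpot : potential H Finset.univ D ≤ (1 + r ^ 2) * γ * n * D ^ 2 := by
    have := potential_univ_le (H := H) hr hγ.le (by linarith) hD0 (by simpa using hbad) hR'
    simpa using this
  obtain ⟨M, hM, hdisj, hcard⟩ := exists_matching_of_potential_le (by omega) hH ha hr hγ hD0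
    (by simpa using hn) hc hB hC (by simpa using hnγ) (by simpa using hna) (by
      rw [Fintype.card_fin]
      have h1 : Real.exp B * (potential H Finset.univ D + n * (C * γ * D ^ 2))
          ≤ Real.exp B * ((1 + r ^ 2) * γ * n * D ^ 2 + n * (C * γ * D ^ 2)) := by gcongr
      have h2 := mul_le_mul_of_nonneg_right hγC (by positivity : 0 ≤ n * D ^ 2 / 4)
      linarith) hR' hP'
  refine ⟨M, hM, hdisj, ?_⟩
  rw [Fintype.card_fin] at hcard
  rw [← mul_div_assoc, div_le_iff₀ hk0]
  have hk2 : (2 : ℝ) ≤ k := by exact_mod_cast hk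
  nlinarith [mul_nonneg (mul_nonneg (by linarith : (0 : ℝ) ≤ k - 2) ha.le) hn0.le]
end
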